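/- Under the zero-loss hypothesis, the thickened prediction foreground F_ε(P) and the thickened ground-truth foreground F_{2ε}(G) are homotopy equivalent topological spaces (with the subspace topology from ℝ²). -/

import Mathlib

open Set Metric

noncomputable section

/-- The plane modeled as `Fin 2 → ℝ` with the Pi (sup) norm. -/
abbrev Plane : Type := Fin 2 → ℝ

/-- The Euclidean plane (for Euclidean-norm disks and annuli). -/
abbrev EPlane : Type := EuclideanSpace ℝ (Fin 2)

/-- The closed unit pixel `[i-1,i] × [j-1,j]` for a pixel index `(i,j)`. -/
def pixel (p : ℕ × ℕ) : Set Plane :=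
  {x | x 0 ∈ Set.Icc ((p.1 : ℝ) - 1) (p.1 : ℝ) ∧ x 1 ∈ Set.Icc ((p.2 : ℝ) - 1) (p.2 : ℝ)}

/-- A binary image `S` lies on the `h × w` grid `{1,…,h} × {1,…,w}`. -/
def OnGrid (S : Set (ℕ × ℕ)) (h w : ℕ) : Prop :=
  S ⊆ Set.Icc 1 h ×ˢ Set.Icc 1 w

/-- The foreground `F(S)` of a binary image. -/
def fg (S : Set (ℕ × ℕ)) : Set Plane := ⋃ p ∈ S, pixel p

/-- Closed `ε`-thickening `D_ε(X)` with respect to the sup norm. -/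
def thick (ε : ℝ) (X : Set Plane) : Set Plane := {y | ∃ x ∈ X, ‖x - y‖ ≤ ε}

/-- `C` is a connected component of `A` (as a subset of the plane). -/
def IsCompOf (C A : Set Plane) : Prop := ∃ x ∈ A, C = connectedComponentIn A x

/-- Two subsets share a boundary edge if their closures intersect in an infinite set. -/
def SharesEdge (C D : Set Plane) : Prop := (closure C ∩ closure D).Infinite

/-- `X` strongly deformation retracts onto `A`. -/
def SDR (X A : Set Plane) : Prop :=
  ∃ H : C(↥X × unitInterval, ↥X),
    (∀ x, H (x, 0) = x) ∧ (∀ x, ((H (x, 1) : Plane)) ∈ A) ∧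
    (∀ a : ↥X, (a : Plane) ∈ A → ∀ t, H (a, t) = a)

def TPset (P G : Set (ℕ × ℕ)) (ε : ℝ) : Set Plane := thick ε (fg P) ∩ thick (2 * ε) (fg G)
def TNset (P G : Set (ℕ × ℕ)) (ε : ℝ) : Set Plane := (thick ε (fg P))ᶜ ∩ (thick (2 * ε) (fg G))ᶜ
def FPset (P G : Set (ℕ × ℕ)) (ε : ℝ) : Set Plane := thick ε (fg P) ∩ (thick (2 * ε) (fg G))ᶜ
def FNset (P G : Set (ℕ × ℕ)) (ε : ℝ) : Set Plane := (thick ε (fg P))ᶜ ∩ thick (2 * ε) (fg G)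

/-- A component `C` (of `FP` or `FN`) is regular: exactly one component of `TP` and exactly
one component of `TN` share a boundary edge with it. -/
def RegularComp (P G : Set (ℕ × ℕ)) (ε : ℝ) (C : Set Plane) : Prop :=
  (∃! T : Set Plane, IsCompOf T (TPset P G ε) ∧ SharesEdge T C) ∧
  (∃! T : Set Plane, IsCompOf T (TNset P G ε) ∧ SharesEdge T C)

/-- The zero-loss hypothesis: every component of `FP` and every component of `FN` is regular. -/
def ZeroLoss (P G : Set (ℕ × ℕ)) (ε : ℝ) : Prop :=
  (∀ C : Set Plane, IsCompOf C (FPset P G ε) → RegularComp P G ε C) ∧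
  (∀ C : Set Plane, IsCompOf C (FNset P G ε) → RegularComp P G ε C)

/-! ### Combinatorics of cells (Khalimsky plane) -/

/-- Cells of the planar grid: an even coordinate is a line, an odd one is an open interval. -/
abbrev Cell : Type := ℤ × ℤ

def le1 (a b : ℤ) : Prop := a = b ∨ (a % 2 = 0 ∧ (b = a + 1 ∨ b = a - 1))

/-- `c` is a (not necessarily proper) face of `d`. -/
def fle (c d : Cell) : Prop := le1 c.1 d.1 ∧ le1 c.2 d.2

/-- A neighbouring open interval of the same type. -/
def st (a : ℤ) : ℤ := if a % 2 = 1 then a else if a % 8 = 0 ∨ a % 8 = 2 then a + 1 else a - 1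

def IsFace (c : Cell) : Prop := c.1 % 2 = 1 ∧ c.2 % 2 = 1
def IsEdge (c : Cell) : Prop := (c.1 + c.2) % 2 = 1
def IsVert (c : Cell) : Prop := c.1 % 2 = 0 ∧ c.2 % 2 = 0

/-- The two faces next to an edge. -/
def sd1 (e : Cell) : Cell := if e.1 % 2 = 0 then (e.1 - 1, e.2) else (e.1, e.2 - 1)
def sd2 (e : Cell) : Cell := if e.1 % 2 = 0 then (e.1 + 1, e.2) else (e.1, e.2 + 1)
/-- The two endpoints of an edge. -/
def en1 (e : Cell) : Cell := if e.1 % 2 = 0 then (e.1, e.2 - 1) else (e.1 - 1, e.2)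
def en2 (e : Cell) : Cell := if e.1 % 2 = 0 then (e.1, e.2 + 1) else (e.1 + 1, e.2)

def CRel (S : Set Cell) : Cell → Cell → Prop :=
  Relation.EqvGen (fun c d => c ∈ S ∧ d ∈ S ∧ fle c d)

def Across {α : Type} (f : Cell → α) (E : Set Cell) : Prop :=
  ∀ e, IsEdge e → e ∈ E → f (sd1 e) = f (sd2 e)

structure Nice (X : Set Cell) : Prop where
  down : ∀ c d, fle c d → d ∈ X → c ∈ X
  s1 : ∀ a b, (st a, b) ∈ X ↔ (a, b) ∈ X
  s2 : ∀ a b, (a, st b) ∈ X ↔ (a, b) ∈ X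

structure Starry (S : Set Cell) : Prop where
  conv : ∀ c m d, fle c m → fle m d → c ∈ S → d ∈ S → m ∈ S
  s1 : ∀ a b, (st a, b) ∈ S ↔ (a, b) ∈ S
  s2 : ∀ a b, (a, st b) ∈ S ↔ (a, b) ∈ S

lemma le1_refl (a : ℤ) : le1 a a := Or.inl rfl
lemma fle_refl (c : Cell) : fle c c := ⟨Or.inl rfl, Or.inl rfl⟩
lemma fle_trans {c d e : Cell} (h1 : fle c d) (h2 : fle d e) : fle c e := by
  unfold fle le1 at *; omega

lemma st_spec (a : ℤ) : st a % 2 = 1 ∧ le1 a (st a) ∧ (a % 2 = 1 → st a = a) ∧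
    (a % 2 = 0 → st a = a + 1 ∨ st a = a - 1) := by
  unfold st le1; split_ifs <;> omega

def cstar (c : Cell) : Cell := (st c.1, st c.2)

lemma star_face {c : Cell} (h : IsFace c) : cstar c = c := by
  unfold cstar; rw [(st_spec c.1).2.2.1 h.1, (st_spec c.2).2.2.1 h.2]

lemma isFace_star (c : Cell) : IsFace (cstar c) := ⟨(st_spec c.1).1, (st_spec c.2).1⟩
lemma fle_star (c : Cell) : fle c (cstar c) := ⟨(st_spec c.1).2.1, (st_spec c.2).2.1⟩

lemma Starry.cstar {S : Set Cell} (h : Starry S) (c : Cell) : cstar c ∈ S ↔ c ∈ S := by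
  obtain ⟨a, b⟩ := c
  unfold _root_.cstar
  rw [h.s1, h.s2]

lemma Nice.starry {X : Set Cell} (h : Nice X) : Starry X :=
  ⟨fun _ m d _ h2 _ hd => h.down m d h2 hd, h.s1, h.s2⟩

lemma starry_inter {X Z : Set Cell} (hX : Nice X) (hZ : Nice Z) : Starry (X ∩ Z) :=
  ⟨fun _ m d _ h2 _ hd => ⟨hX.down m d h2 hd.1, hZ.down m d h2 hd.2⟩,
    fun a b => by simp [hX.s1, hZ.s1], fun a b => by simp [hX.s2, hZ.s2]⟩

lemma starry_diff {X Z : Set Cell} (hX : Nice X) (hZ : Nice Z) : Starry (X ∩ Zᶜ) :=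
  ⟨fun c m d h1 h2 hc hd => ⟨hX.down m d h2 hd.1, fun hm => hc.2 (hZ.down c m h1 hm)⟩,
    fun a b => by simp [hX.s1, hZ.s1], fun a b => by simp [hX.s2, hZ.s2]⟩

lemma starry_compl {X Z : Set Cell} (hX : Nice X) (hZ : Nice Z) : Starry (Xᶜ ∩ Zᶜ) :=
  ⟨fun c m _ h1 _ hc _ => ⟨fun hm => hc.1 (hX.down c m h1 hm), fun hm => hc.2 (hZ.down c m h1 hm)⟩,
    fun a b => by simp [hX.s1, hZ.s1], fun a b => by simp [hX.s2, hZ.s2]⟩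

lemma CRel.const {S : Set Cell} {α : Type} (g : Cell → α)
    (hg : ∀ c d, c ∈ S → d ∈ S → fle c d → g c = g d) {c d : Cell} (h : CRel S c d) : g c = g d := by
  induction h with
  | rel x y h => exact hg x y h.1 h.2.1 h.2.2
  | refl x => rfl
  | symm x y _ ih => exact ih.symm
  | trans x y z _ _ ih1 ih2 => exact ih1.trans ih2

lemma CRel.mem {S : Set Cell} {c d : Cell} (h : CRel S c d) : c ∈ S ↔ d ∈ S := by
  have := CRel.const (S := S) (fun c => c ∈ S) (fun c d hc hd _ => by simp [hc, hd]) h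
  simpa using this

lemma CRel.mono {S S' : Set Cell} (hS : S ⊆ S') {c d : Cell} (h : CRel S c d) : CRel S' c d :=
  Relation.EqvGen.mono (fun (_ _ : Cell) h => ⟨hS h.1, hS h.2.1, h.2.2⟩) c d h

lemma CRel.symm {S : Set Cell} {c d : Cell} (h : CRel S c d) : CRel S d c := Relation.EqvGen.symm _ _ h
lemma CRel.trans {S : Set Cell} {c d e : Cell} (h : CRel S c d) (h' : CRel S d e) : CRel S c e :=
  Relation.EqvGen.trans _ _ _ h h'
lemma CRel.refl {S : Set Cell} (c : Cell) : CRel S c c := Relation.EqvGen.refl _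
lemma CRel.of {S : Set Cell} {c d : Cell} (hc : c ∈ S) (hd : d ∈ S) (h : fle c d) : CRel S c d :=
  Relation.EqvGen.rel _ _ ⟨hc, hd, h⟩

lemma edge_sides {e : Cell} (he : IsEdge e) :
    (e.1 % 2 = 0 ∧ e.2 % 2 = 1 ∧ sd1 e = (e.1 - 1, e.2) ∧ sd2 e = (e.1 + 1, e.2) ∧
      en1 e = (e.1, e.2 - 1) ∧ en2 e = (e.1, e.2 + 1)) ∨
    (e.1 % 2 = 1 ∧ e.2 % 2 = 0 ∧ sd1 e = (e.1, e.2 - 1) ∧ sd2 e = (e.1, e.2 + 1) ∧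
      en1 e = (e.1 - 1, e.2) ∧ en2 e = (e.1 + 1, e.2)) := by
  unfold IsEdge at he
  unfold sd1 sd2 en1 en2
  by_cases h : e.1 % 2 = 0
  · left; simp [h]; omega
  · right; simp [h]; omega

lemma star_step {S : Set Cell} (hS : Starry S) {α : Type} (f : Cell → α) (hf : Across f S)
    (c d : Cell) (hc : c ∈ S) (hd : d ∈ S) (hcd : fle c d) : f (cstar c) = f (cstar d) := by
  obtain ⟨a, b⟩ := c
  obtain ⟨a', b'⟩ := d
  have hm : (a', b) ∈ S := by
    refine hS.conv (a, b) (a', b) (a', b') ⟨hcd.1, le1_refl _⟩ ⟨le1_refl _, hcd.2⟩ hc hd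
  have key1 : f (cstar (a, b)) = f (cstar (a', b)) := by
    have h1 := st_spec a
    have h1' := st_spec a'
    have h2 := st_spec b
    rcases hcd.1 with h | ⟨h0, h⟩
    · simp only at h; rw [h]
    · simp only at h0 h
      have he : IsEdge (a, st b) := by unfold IsEdge; simp only; omega
      have h3 := hf (a, st b) he ((hS.s2 _ _).2 hc)
      rcases edge_sides he with ⟨-, -, e1, e2, -⟩ | ⟨h4, -⟩
      · rw [e1, e2] at h3
        simp only at h3
        unfold cstar
        simp only
        rw [h1'.2.2.1 (by omega)]
        rcases h1.2.2.2 h0 with h5 | h5 <;> rcases h with h | h <;> rw [h5, h] <;> simp [h3]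
      · simp only at h4; omega
  have key2 : f (cstar (a', b)) = f (cstar (a', b')) := by
    have h1 := st_spec b
    have h1' := st_spec b'
    have h2 := st_spec a'
    rcases hcd.2 with h | ⟨h0, h⟩
    · simp only at h; rw [h]
    · simp only at h0 h
      have he : IsEdge (st a', b) := by unfold IsEdge; simp only; omega
      have h3 := hf (st a', b) he ((hS.s1 _ _).2 hm)
      rcases edge_sides he with ⟨h4, -⟩ | ⟨-, -, e1, e2, -⟩
      · simp only at h4; omega
      · rw [e1, e2] at h3
        simp only at h3
        unfold cstar
        simp only
        rw [h1'.2.2.1 (by omega)]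
        rcases h1.2.2.2 h0 with h5 | h5 <;> rcases h with h | h <;> rw [h5, h] <;> simp [h3]
  exact key1.trans key2

lemma star_const {S : Set Cell} (hS : Starry S) {α : Type} (f : Cell → α) (hf : Across f S)
    {c d : Cell} (h : CRel S c d) : f (cstar c) = f (cstar d) :=
  CRel.const (fun c => f (cstar c)) (fun c d hc hd hcd => star_step hS f hf c d hc hd hcd) h

lemma edge_facts {e : Cell} (he : IsEdge e) : IsFace (sd1 e) ∧ IsFace (sd2 e) ∧ IsVert (en1 e) ∧
    IsVert (en2 e) ∧ fle e (sd1 e) ∧ fle e (sd2 e) ∧ fle (en1 e) e ∧ fle (en2 e) e ∧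
    sd1 e ≠ sd2 e ∧ en1 e ≠ en2 e := by
  rcases edge_sides he with ⟨h1, h2, e1, e2, e3, e4⟩ | ⟨h1, h2, e1, e2, e3, e4⟩ <;>
  · rw [e1, e2, e3, e4]
    simp only [IsFace, IsVert, fle, le1, ne_eq, Prod.mk.injEq, true_or, or_true, and_true, true_and]
    refine ⟨?_, ?_, ?_, ?_, ?_, ?_, ?_, ?_, ?_, ?_⟩ <;> omega

lemma edge_face {e s : Cell} (he : IsEdge e) (hs : IsFace s) (h : fle e s) :
    s = sd1 e ∨ s = sd2 e := by
  obtain ⟨a, b⟩ := s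
  rcases edge_sides he with ⟨h1, h2, e1, e2, -, -⟩ | ⟨h1, h2, e1, e2, -, -⟩ <;>
  · rw [e1, e2]
    simp only [IsFace, fle, le1, Prod.mk.injEq] at *
    omega

lemma edge_vert {e v : Cell} (he : IsEdge e) (hs : IsVert v) (h : fle v e) :
    v = en1 e ∨ v = en2 e := by
  obtain ⟨a, b⟩ := v
  rcases edge_sides he with ⟨h1, h2, -, -, e1, e2⟩ | ⟨h1, h2, -, -, e1, e2⟩ <;>
  · rw [e1, e2]
    simp only [IsVert, fle, le1, Prod.mk.injEq] at *
    omega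

lemma face_max {s d : Cell} (hs : IsFace s) (h : fle s d) : d = s := by
  obtain ⟨a, b⟩ := s; obtain ⟨a', b'⟩ := d
  simp only [IsFace, fle, le1, Prod.mk.injEq] at *; omega

lemma edge_up {e d : Cell} (he : IsEdge e) (h : fle e d) : d = e ∨ IsFace d := by
  obtain ⟨a, b⟩ := e; obtain ⟨a', b'⟩ := d
  simp only [IsFace, IsEdge, fle, le1, Prod.mk.injEq] at *; omega

lemma edge_down {e d : Cell} (he : IsEdge e) (h : fle d e) : d = e ∨ IsVert d := by
  obtain ⟨a, b⟩ := e; obtain ⟨a', b'⟩ := d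
  simp only [IsVert, IsEdge, fle, le1, Prod.mk.injEq] at *; omega

lemma vert_down {e d : Cell} (he : IsVert e) (h : fle d e) : d = e := by
  obtain ⟨a, b⟩ := e; obtain ⟨a', b'⟩ := d
  simp only [IsVert, fle, le1, Prod.mk.injEq] at *; omega

lemma trichotomy (c : Cell) : IsFace c ∨ IsEdge c ∨ IsVert c := by
  simp only [IsVert, IsEdge, IsFace]; omega

lemma edge_not {e : Cell} (he : IsEdge e) : ¬ IsFace e ∧ ¬ IsVert e := by
  simp only [IsVert, IsEdge, IsFace] at *; omega

lemma vert_not {e : Cell} (he : IsVert e) : ¬ IsFace e ∧ ¬ IsEdge e := by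
  simp only [IsVert, IsEdge, IsFace] at *; omega

/-! ### Mod 2 chains -/

def bd (z : Cell → ZMod 2) (v : Cell) : ZMod 2 :=
  z (v.1 - 1, v.2) + z (v.1 + 1, v.2) + z (v.1, v.2 - 1) + z (v.1, v.2 + 1)

lemma fill (z : Cell → ZMod 2) (hpos : ∀ c : Cell, c.1 < 0 → z c = 0)
    (hcyc : ∀ v, IsVert v → bd z v = 0) :
    ∃ f : Cell → ZMod 2, ∀ e, IsEdge e → f (sd1 e) + f (sd2 e) = z e := by
  have hsum : ∀ (b : ℤ), b % 2 = 0 → ∀ n : ℕ,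
      (∑ i ∈ Finset.range n, z (2 * (i : ℤ), b - 1)) + (∑ i ∈ Finset.range n, z (2 * (i : ℤ), b + 1))
        = z (2 * (n : ℤ) - 1, b) := by
    intro b hb n
    induction n with
    | zero => simp [hpos]
    | succ n ih =>
      rw [Finset.sum_range_succ, Finset.sum_range_succ]
      have h := hcyc (2 * (n : ℤ), b) ⟨by simp, hb⟩
      unfold bd at h
      simp only at h
      have e : 2 * ((n + 1 : ℕ) : ℤ) - 1 = 2 * (n : ℤ) + 1 := by push_cast; ring
      rw [e]
      have key : ∀ s t a b c d : ZMod 2, s + t = a → a + b + c + d = 0 → s + c + (t + d) = b := by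
        decide
      exact key _ _ _ _ _ _ ih h
  refine ⟨fun c => ∑ i ∈ Finset.range ((c.1 + 1) / 2).toNat, z (2 * (i : ℤ), c.2), ?_⟩
  rintro ⟨a, b⟩ he
  rcases edge_sides he with ⟨h1, h2, e1, e2, -, -⟩ | ⟨h1, h2, e1, e2, -, -⟩
  · simp only at h1 h2 e1 e2
    rw [e1, e2]
    simp only
    rcases lt_or_ge a 0 with ha | ha
    · rw [hpos _ ha]
      have q1 : ((a - 1 + 1) / 2).toNat = 0 := by omega
      have q2 : ((a + 1 + 1) / 2).toNat = 0 := by omega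
      rw [q1, q2]; simp
    · obtain ⟨k, rfl⟩ : ∃ k : ℕ, a = 2 * (k : ℤ) := ⟨(a / 2).toNat, by omega⟩
      have q1 : ((2 * (k : ℤ) - 1 + 1) / 2).toNat = k := by omega
      have q2 : ((2 * (k : ℤ) + 1 + 1) / 2).toNat = k + 1 := by omega
      rw [q1, q2, Finset.sum_range_succ, ← add_assoc, CharTwo.add_self_eq_zero, zero_add]
  · simp only at h1 h2 e1 e2
    rw [e1, e2]
    simp only
    rw [hsum b h2]
    rcases lt_or_ge a 0 with ha | ha
    · rw [hpos (a, b) ha, hpos]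
      simp only; omega
    · congr 2; omega

def ZR (E : Set Cell) (u w : Cell) : Prop :=
  ∃ z : Cell → ZMod 2, (∀ c, c ∉ E → z c = 0) ∧
    ∀ v, IsVert v → bd z v = (if v = u then 1 else 0) + (if v = w then 1 else 0)

lemma ZR.refl {E : Set Cell} (u : Cell) : ZR E u u :=
  ⟨fun _ => 0, fun _ _ => rfl, fun v _ => by simp [bd, CharTwo.add_self_eq_zero]⟩

lemma ZR.symm {E : Set Cell} {u w : Cell} (h : ZR E u w) : ZR E w u := by
  obtain ⟨z, h1, h2⟩ := h
  exact ⟨z, h1, fun v hv => by rw [h2 v hv, add_comm]⟩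

lemma ZR.mono {E E' : Set Cell} (hE : E ⊆ E') {u w : Cell} (h : ZR E u w) : ZR E' u w := by
  obtain ⟨z, h1, h2⟩ := h
  exact ⟨z, fun c hc => h1 c fun h => hc (hE h), h2⟩

lemma ZR.trans {E : Set Cell} {u v w : Cell} (h : ZR E u v) (h' : ZR E v w) : ZR E u w := by
  obtain ⟨z, h1, h2⟩ := h
  obtain ⟨z', h1', h2'⟩ := h'
  refine ⟨fun c => z c + z' c, fun c hc => by simp [h1 c hc, h1' c hc], fun x hx => ?_⟩
  have e : bd (fun c => z c + z' c) x = bd z x + bd z' x := by unfold bd; ring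
  rw [e, h2 x hx, h2' x hx]
  have key : ∀ a b c : ZMod 2, a + b + (b + c) = a + c := by decide
  exact key _ _ _

lemma bd_single {e : Cell} (he : IsEdge e) (v : Cell) (hv : IsVert v) :
    bd (fun c => if c = e then 1 else 0) v =
      (if v = en1 e then 1 else 0) + (if v = en2 e then 1 else 0) := by
  obtain ⟨a, b⟩ := v
  obtain ⟨x, y⟩ := e
  unfold bd
  unfold IsVert at hv
  rcases edge_sides he with ⟨h1, h2, -, -, e1, e2⟩ | ⟨h1, h2, -, -, e1, e2⟩
  · rw [e1, e2]
    simp only [Prod.mk.injEq] at *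
    rw [if_neg (show ¬ (a - 1 = x ∧ b = y) by omega), if_neg (show ¬ (a + 1 = x ∧ b = y) by omega)]
    simp only [zero_add]
    rw [add_comm]
    congr 1
    · congr 1; apply propext; omega
    · congr 1; apply propext; omega
  · rw [e1, e2]
    simp only [Prod.mk.injEq] at *
    rw [if_neg (show ¬ (a = x ∧ b - 1 = y) by omega), if_neg (show ¬ (a = x ∧ b + 1 = y) by omega)]
    simp only [add_zero]
    rw [add_comm]
    congr 1
    · congr 1; apply propext; omega
    · congr 1; apply propext; omega

lemma ZR.edge {E : Set Cell} {e : Cell} (he : IsEdge e) (heE : e ∈ E) : ZR E (en1 e) (en2 e) := by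
  refine ⟨fun c => if c = e then 1 else 0, fun c hc => ?_, fun v hv => bd_single he v hv⟩
  simp only
  rw [if_neg]; rintro rfl; exact hc heE

lemma ZR.edge' {E : Set Cell} {e u w : Cell} (he : IsEdge e) (heE : e ∈ E)
    (hu : IsVert u) (hw : IsVert w) (hue : fle u e) (hwe : fle w e) : ZR E u w := by
  rcases edge_vert he hu hue with rfl | rfl <;> rcases edge_vert he hw hwe with rfl | rfl
  · exact ZR.refl _
  · exact ZR.edge he heE
  · exact (ZR.edge he heE).symm
  · exact ZR.refl _

/-- Discrete Jordan separation. -/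
lemma jordan {E : Set Cell} (hpos : ∀ c ∈ E, 0 ≤ c.1) {e : Cell} (he : IsEdge e)
    (h : ZR (E \ {e}) (en1 e) (en2 e)) (heE : e ∈ E) :
    ∃ f : Cell → ZMod 2, Across f Eᶜ ∧ f (sd1 e) ≠ f (sd2 e) := by
  obtain ⟨z, h1, h2⟩ := h
  obtain ⟨f, hf⟩ := fill (fun c => z c + if c = e then 1 else 0)
    (fun c hc => by
      have : c ∉ E := fun h => absurd (hpos c h) (by omega)
      rw [h1 c (fun h => this h.1), if_neg]
      · simp
      · rintro rfl; exact this heE)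
    (fun v hv => by
      have e' : bd (fun c => z c + if c = e then 1 else 0) v
          = bd z v + bd (fun c => if c = e then 1 else 0) v := by unfold bd; ring
      rw [e', h2 v hv, bd_single he v hv, CharTwo.add_self_eq_zero])
  refine ⟨f, fun e' he' hE => ?_, fun hh => ?_⟩
  · have := hf e' he'
    rw [h1 e' (fun h => hE h.1), if_neg, add_zero] at this
    · exact CharTwo.add_eq_zero.1 this
    · rintro rfl; exact hE heE
  · have := hf e he
    rw [h1 e (fun h => h.2 rfl), hh, CharTwo.add_self_eq_zero] at this
    simp at this

/-- Two vertices of a closed cell of `Y` are joined by a chain in `Y`. -/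
lemma ZR.cell {Y : Set Cell} (hY : ∀ c d, fle c d → d ∈ Y → c ∈ Y) {d u w : Cell} (hd : d ∈ Y)
    (hu : IsVert u) (hw : IsVert w) (hud : fle u d) (hwd : fle w d) : ZR Y u w := by
  obtain ⟨a, b⟩ := u
  obtain ⟨a', b'⟩ := w
  obtain ⟨x, y⟩ := d
  have k1 : ZR Y (a, b) (a', b) := by
    by_cases h : a = a'
    · rw [h]; exact ZR.refl _
    · refine ZR.edge' (e := (x, b)) ?_ (hY _ _ ?_ hd) hu ?_ ?_ ?_ <;>
      simp only [IsVert, IsEdge, fle, le1, true_or, or_true, true_and, and_true] at * <;> omega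
  have k2 : ZR Y (a', b) (a', b') := by
    by_cases h : b = b'
    · rw [h]; exact ZR.refl _
    · refine ZR.edge' (e := (a', y)) ?_ (hY _ _ ?_ hd) ?_ hw ?_ ?_ <;>
      simp only [IsVert, IsEdge, fle, le1, true_or, or_true, true_and, and_true] at * <;> omega
  exact k1.trans k2

lemma exists_vert (c : Cell) : ∃ v, IsVert v ∧ fle v c := by
  refine ⟨(c.1 - c.1 % 2, c.2 - c.2 % 2), ?_, ?_⟩ <;> simp only [IsVert, fle, le1] <;> omega

lemma ZR.of_rel {Y : Set Cell} (hY : ∀ c d, fle c d → d ∈ Y → c ∈ Y) {c d : Cell}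
    (h : CRel Y c d) (hc : c ∈ Y) : ∀ u w, IsVert u → IsVert w → fle u c → fle w d → ZR Y u w := by
  have : ∀ {c d : Cell}, CRel Y c d → c ∈ Y →
      ∀ u w, IsVert u → IsVert w → fle u c → fle w d → ZR Y u w := by
    intro c d h
    induction h with
    | rel x y h => exact fun _ u w hu hw h1 h2 => ZR.cell hY h.2.1 hu hw (fle_trans h1 h.2.2) h2
    | refl x => exact fun hx u w hu hw h1 h2 => ZR.cell hY hx hu hw h1 h2
    | symm x y hr ih => exact fun hy u w hu hw h1 h2 =>
        (ih ((CRel.mem hr).2 hy) w u hw hu h2 h1).symm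
    | trans x y z hr hr' ih1 ih2 =>
      intro hx u w hu hw h1 h2
      obtain ⟨v, hv, hvy⟩ := exists_vert y
      exact (ih1 hx u v hu hv h1 hvy).trans (ih2 ((CRel.mem hr).1 hx) v w hv hw hvy h2)
  exact this h hc

/-! ### The combinatorial collapse theorem -/

/-- What the zero-loss hypothesis says combinatorially. -/
structure Comb (X Z : Set Cell) : Prop where
  hX : Nice X
  hZ : Nice Z
  fin : X.Finite
  pos : ∀ c ∈ X, 0 ≤ c.1
  F1 : ∀ c ∈ X ∩ Zᶜ, ∃ e t, IsEdge e ∧ CRel (X ∩ Zᶜ) c e ∧ IsFace t ∧ fle e t ∧ t ∉ X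
  F2 : ∀ c ∈ X ∩ Zᶜ, ∃ d y, CRel (X ∩ Zᶜ) c d ∧ y ∈ X ∩ Z ∧ fle y d
  F3 : ∀ e e' t t', IsEdge e → IsEdge e' → e ∈ X ∩ Zᶜ → CRel (X ∩ Zᶜ) e e' → IsFace t → IsFace t' →
    fle e t → fle e' t' → t ∉ X → t' ∉ X → CRel (Xᶜ ∩ Zᶜ) t t'
  F4 : ∀ e e' y y', IsEdge e → IsEdge e' → e ∈ X ∩ Zᶜ → CRel (X ∩ Zᶜ) e e' → IsVert y → IsVert y' →
    fle y e → fle y' e' → y ∈ X ∩ Z → y' ∈ X ∩ Z → CRel (X ∩ Z) y y'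

/-- The cell `t` is a free face of `s`. -/
def FreePair (X' : Set Cell) (t s : Cell) : Prop :=
  s ∈ X' ∧ fle t s ∧ t ≠ s ∧ (t.1 = s.1 ∨ t.2 = s.2) ∧ ∀ d ∈ X', fle t d → d = t ∨ d = s

def DownSet (X' : Set Cell) : Prop := ∀ c d, fle c d → d ∈ X' → c ∈ X'

/-- Removed faces are connected to the true negatives in the complement. -/
def TNInv (X Z X' : Set Cell) : Prop :=
  ∀ f : Cell → ZMod 2, Across f X'ᶜ → ∀ r, IsFace r → r ∈ X → r ∉ X' →
    ∃ e t, IsEdge e ∧ CRel (X ∩ Zᶜ) r e ∧ IsFace t ∧ fle e t ∧ t ∉ X ∧ f r = f t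

lemma edge_face_free {e s : Cell} (he : IsEdge e) (hs : IsFace s) (h : fle e s) :
    e ≠ s ∧ (e.1 = s.1 ∨ e.2 = s.2) := by
  obtain ⟨a, b⟩ := e; obtain ⟨a', b'⟩ := s
  simp only [IsFace, IsEdge, fle, le1, ne_eq, Prod.mk.injEq] at *; omega

lemma vert_edge_free {e s : Cell} (he : IsVert e) (hs : IsEdge s) (h : fle e s) :
    e ≠ s ∧ (e.1 = s.1 ∨ e.2 = s.2) := by
  obtain ⟨a, b⟩ := e; obtain ⟨a', b'⟩ := s
  simp only [IsVert, IsEdge, fle, le1, ne_eq, Prod.mk.injEq] at *; omega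

lemma Across.mono {α : Type} {f : Cell → α} {E E' : Set Cell} (h : Across f E) (hE : E' ⊆ E) :
    Across f E' := fun e he heE => h e he (hE heE)

lemma free_face {X Z X' : Set Cell} (H : Comb X Z) (hXX : X' ⊆ X) (hdown : DownSet X')
    (hinv : TNInv X Z X') (s0 : Cell) (hs0 : IsFace s0) (hs0X : s0 ∈ X') (hs0Z : s0 ∉ Z) :
    ∃ t s, FreePair X' t s ∧ t ∉ X ∩ Z ∧ TNInv X Z (X' \ {t, s}) := by
  by_cases hfree : ∃ e s, IsEdge e ∧ IsFace s ∧ fle e s ∧ s ∈ X' ∧ e ∉ Z ∧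
      ∀ d ∈ X', IsFace d → fle e d → d = s
  · obtain ⟨e, s, he, hs, hes, hsX, heZ, huniq⟩ := hfree
    have hne := edge_face_free he hs hes
    have heX' : e ∈ X' := hdown _ _ hes hsX
    have heS : e ∈ X ∩ Zᶜ := ⟨hXX heX', heZ⟩
    have hsS : s ∈ X ∩ Zᶜ := ⟨hXX hsX, fun h => heZ (H.hZ.down _ _ hes h)⟩
    refine ⟨e, s, ⟨hsX, hes, hne.1, hne.2, fun d hd hed => ?_⟩, fun h => heZ h.2, ?_⟩
    · rcases edge_up he hed with h | h
      · exact Or.inl h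
      · exact Or.inr (huniq d hd h hed)
    · intro f hf r hr hrX hrX''
      have hf' : Across f X'ᶜ := hf.mono (fun c hc h => hc h.1)
      by_cases hrX' : r ∈ X'
      · have hrs : r = s := by
          by_contra hrs
          apply hrX''
          refine ⟨hrX', ?_⟩
          rintro (h | h)
          · rw [h] at hr; exact (edge_not he).1 hr
          · exact hrs h
        subst hrs
        -- the other side of `e`
        obtain ⟨r', hr', her', hne', hff⟩ : ∃ r', IsFace r' ∧ fle e r' ∧ r' ≠ r ∧ f r = f r' := by
          have hfe := hf e he (fun h => h.2 (Or.inl rfl))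
          obtain ⟨k1, k2, -, -, k5, k6, -, -, k9, -⟩ := edge_facts he
          rcases edge_face he hr hes with h | h
          · exact ⟨sd2 e, k2, k6, by rw [h]; exact k9.symm, by rw [h, hfe]⟩
          · exact ⟨sd1 e, k1, k5, by rw [h]; exact k9, by rw [h, hfe]⟩
        have hr'X' : r' ∉ X' := fun h => hne' (huniq r' h hr' her')
        by_cases hr'X : r' ∈ X
        · obtain ⟨e1, t, q1, q2, q3, q4, q5, q6⟩ := hinv f hf' r' hr' hr'X hr'X'
          refine ⟨e1, t, q1, ?_, q3, q4, q5, hff.trans q6⟩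
          have hr'S : r' ∈ X ∩ Zᶜ := ⟨hr'X, fun h => heZ (H.hZ.down _ _ her' h)⟩
          exact (CRel.of heS hsS hes).symm.trans ((CRel.of heS hr'S her').trans q2)
        · exact ⟨e, r', he, (CRel.of heS hsS hes).symm, hr', her', hr'X, hff⟩
      · exact hinv f hf' r hr hrX hrX'
  · exfalso
    push Not at hfree
    have hA : Across (fun c => c ∈ X' ∧ c ∉ Z ∧ IsFace c) (X ∩ Zᶜ) := by
      intro e he heS
      obtain ⟨k1, k2, -, -, k5, k6, -, -, k9, -⟩ := edge_facts he
      apply propext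
      constructor
      · rintro ⟨h1, h2, h3⟩
        obtain ⟨d, hd1, hd2, hd3, hd4⟩ := hfree e (sd1 e) he k1 k5 h1 heS.2
        rcases edge_face he hd2 hd3 with rfl | rfl
        · exact absurd rfl hd4
        · exact ⟨hd1, fun h => heS.2 (H.hZ.down _ _ k6 h), hd2⟩
      · rintro ⟨h1, h2, h3⟩
        obtain ⟨d, hd1, hd2, hd3, hd4⟩ := hfree e (sd2 e) he k2 k6 h1 heS.2
        rcases edge_face he hd2 hd3 with rfl | rfl
        · exact ⟨hd1, fun h => heS.2 (H.hZ.down _ _ k5 h), hd2⟩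
        · exact absurd rfl hd4
    have hs0S : s0 ∈ X ∩ Zᶜ := ⟨hXX hs0X, hs0Z⟩
    obtain ⟨e, t, he, hce, ht, het, htX⟩ := H.F1 s0 hs0S
    have heS : e ∈ X ∩ Zᶜ := hce.mem.1 hs0S
    have h1 := star_const (starry_diff H.hX H.hZ) _ hA hce
    rw [star_face hs0] at h1
    have h2 : cstar e ∈ X' ∧ cstar e ∉ Z ∧ IsFace (cstar e) := h1.mp ⟨hs0X, hs0Z, hs0⟩
    obtain ⟨d, hd1, hd2, hd3, hd4⟩ := hfree e (cstar e) he h2.2.2 (fle_star e) h2.1 heS.2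
    have ht1 : t ≠ d := fun h => htX (h ▸ hXX hd1)
    have ht2 : t ≠ cstar e := fun h => htX (h ▸ hXX h2.1)
    rcases edge_face he hd2 hd3 with q | q <;> rcases edge_face he h2.2.2 (fle_star e) with q' | q' <;>
      rcases edge_face he ht het with q'' | q'' <;>
      first
      | exact hd4 (q.trans q'.symm)
      | exact ht1 (q''.trans q.symm)
      | exact ht2 (q''.trans q'.symm)

/-! Graph stage -/

def Rch (X' Y : Set Cell) : ℕ → Cell → Prop
  | 0, v => v ∈ Y
  | n + 1, v => ∃ e w, IsEdge e ∧ e ∈ X' ∧ e ∉ Y ∧ fle v e ∧ fle w e ∧ IsVert w ∧ w ≠ v ∧ Rch X' Y n w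

def dst (X' Y : Set Cell) (v : Cell) : ℕ := sInf {n | Rch X' Y n v}

lemma dst_spec {X' Y : Set Cell} {v : Cell} (h : ∃ n, Rch X' Y n v) : Rch X' Y (dst X' Y v) v :=
  Nat.sInf_mem (s := {n | Rch X' Y n v}) h

lemma dst_le {X' Y : Set Cell} {v : Cell} {n : ℕ} (h : Rch X' Y n v) : dst X' Y v ≤ n :=
  Nat.sInf_le (s := {n | Rch X' Y n v}) h

/-- First step of a shortest path. -/
lemma dst_step {X' Y : Set Cell} {v : Cell} (h : ∃ n, Rch X' Y n v) (hv : v ∉ Y) :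
    ∃ e w, IsEdge e ∧ e ∈ X' ∧ e ∉ Y ∧ fle v e ∧ fle w e ∧ IsVert w ∧ w ≠ v ∧
      (∃ n, Rch X' Y n w) ∧ dst X' Y w < dst X' Y v := by
  have h1 := dst_spec h
  cases hn : dst X' Y v with
  | zero => rw [hn] at h1; exact absurd h1 hv
  | succ n =>
    rw [hn] at h1
    obtain ⟨e, w, q1, q2, q3, q4, q5, q6, q7, q8⟩ := h1
    exact ⟨e, w, q1, q2, q3, q4, q5, q6, q7, ⟨n, q8⟩, Nat.lt_succ_of_le (dst_le q8)⟩

lemma descend {X Z X' : Set Cell} (H : Comb X Z) (hXX : X' ⊆ X) (e2 v : Cell) (he2 : IsEdge e2)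
    (hv : IsVert v) (hve2 : fle v e2) :
    ∀ n w e0, dst X' (X ∩ Z) w ≤ n → IsVert w → (∃ n, Rch X' (X ∩ Z) n w) → IsEdge e0 → e0 ∈ X' →
      e0 ∉ X ∩ Z → fle w e0 → v ≠ w → dst X' (X ∩ Z) w ≤ dst X' (X ∩ Z) v →
      ∃ y e', y ∈ X ∩ Z ∧ IsVert y ∧ IsEdge e' ∧ fle y e' ∧ CRel (X ∩ Zᶜ) e0 e' ∧
        ZR (X' \ {e2}) w y := by
  intro n
  induction n with
  | zero =>
    intro w e0 hn hw hr he0 he0X he0Y hwe0 hvw hd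
    refine ⟨w, e0, ?_, hw, he0, hwe0, CRel.refl _, ZR.refl _⟩
    have := dst_spec hr
    rw [Nat.le_zero.1 hn] at this
    exact this
  | succ n ih =>
    intro w e0 hn hw hr he0 he0X he0Y hwe0 hvw hd
    by_cases hwY : w ∈ X ∩ Z
    · exact ⟨w, e0, hwY, hw, he0, hwe0, CRel.refl _, ZR.refl _⟩
    · obtain ⟨e, w', q1, q2, q3, q4, q5, q6, q7, q8, q9⟩ := dst_step hr hwY
      have hvw' : v ≠ w' := by rintro rfl; omega
      obtain ⟨y, e', r1, r2, r3, r4, r5, r6⟩ :=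
        ih w' e (by omega) q6 q8 q1 q2 q3 q5 hvw' (by omega)
      have he0S : e0 ∈ X ∩ Zᶜ := ⟨hXX he0X, fun h => he0Y ⟨hXX he0X, h⟩⟩
      have heS : e ∈ X ∩ Zᶜ := ⟨hXX q2, fun h => q3 ⟨hXX q2, h⟩⟩
      have hwX : w ∈ X := H.hX.down _ _ hwe0 he0S.1
      have hwS : w ∈ X ∩ Zᶜ := ⟨hwX, fun h => hwY ⟨hwX, h⟩⟩
      refine ⟨y, e', r1, r2, r3, r4,
        (CRel.of hwS he0S hwe0).symm.trans ((CRel.of hwS heS q4).trans r5), ?_⟩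
      refine (ZR.edge' (E := X' \ {e2}) q1 ⟨q2, ?_⟩ hw q6 q4 q5).trans r6
      rintro rfl
      rcases edge_vert q1 hv hve2 with h | h <;> rcases edge_vert q1 hw q4 with h' | h' <;>
        rcases edge_vert q1 q6 q5 with h'' | h'' <;> simp_all

lemma free_vert {X Z X' : Set Cell} (H : Comb X Z) (hYX : X ∩ Z ⊆ X') (hXX : X' ⊆ X)
    (hdown : DownSet X') (hinv : TNInv X Z X') (hconn : ∀ c ∈ X', ∃ y ∈ X ∩ Z, CRel X' c y)
    (hnof : ∀ s, IsFace s → s ∈ X' → s ∈ X ∩ Z) (hne : X' ≠ X ∩ Z) :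
    ∃ t s, FreePair X' t s ∧ t ∉ X ∩ Z ∧ TNInv X Z (X' \ {t, s}) := by
  have hYdown : DownSet (X ∩ Z) := fun c d h hd => ⟨H.hX.down _ _ h hd.1, H.hZ.down _ _ h hd.2⟩
  -- it suffices to find a free vertex
  suffices hv : ∃ v e, IsVert v ∧ IsEdge e ∧ fle v e ∧ e ∈ X' ∧ v ∉ X ∩ Z ∧
      ∀ d ∈ X', fle v d → IsEdge d → d = e by
    obtain ⟨v, e, hv, he, hve, heX, hvY, huniq⟩ := hv
    have h1 := vert_edge_free hv he hve
    refine ⟨v, e, ⟨heX, hve, h1.1, h1.2, fun d hd hvd => ?_⟩, hvY, ?_⟩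
    · rcases trichotomy d with h | h | h
      · exact absurd (hYdown _ _ hvd (hnof d h hd)) hvY
      · exact Or.inr (huniq d hd hvd h)
      · exact Or.inl (vert_down h hvd).symm
    · intro f hf r hr hrX hrX''
      refine hinv f (hf.mono fun c hc h => hc h.1) r hr hrX fun h => hrX'' ⟨h, ?_⟩
      rintro (h' | h')
      · rw [h'] at hr; exact (vert_not hv).1 hr
      · rw [h'] at hr; exact (edge_not he).1 hr
  by_contra hstuck
  push Not at hstuck
  -- every vertex reaches `Y`
  have hreach : ∀ v ∈ X', IsVert v → ∃ n, Rch X' (X ∩ Z) n v := by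
    intro v hvX hv
    obtain ⟨y, hy, hvy⟩ := hconn v hvX
    have := CRel.const (fun c => c ∈ X ∩ Z ∨ ∃ u, IsVert u ∧ fle u c ∧ ∃ n, Rch X' (X ∩ Z) n u)
      (fun c d hc hd hcd => by
        apply propext
        by_cases hdY : d ∈ X ∩ Z
        · exact ⟨fun _ => Or.inl hdY, fun _ => Or.inl (hYdown _ _ hcd hdY)⟩
        by_cases hEq : c = d
        · rw [hEq]
        have hdE : IsEdge d := by
          rcases trichotomy d with h | h | h
          · exact absurd (hnof d h hd) hdY
          · exact h
          · exact absurd (vert_down h hcd) hEq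
        have hcV : IsVert c := (edge_down hdE hcd).resolve_left hEq
        constructor
        · rintro (h | ⟨u, hu, huc, hn⟩)
          · exact Or.inr ⟨c, hcV, hcd, 0, h⟩
          · exact Or.inr ⟨u, hu, fle_trans huc hcd, hn⟩
        · rintro (h | ⟨u, hu, hud, n, hn⟩)
          · exact absurd h hdY
          · by_cases huc : u = c
            · exact Or.inr ⟨c, hcV, fle_refl _, n, huc ▸ hn⟩
            · exact Or.inr ⟨c, hcV, fle_refl _, n + 1, d, u, hdE, hd, hdY, hcd, hud, hu, huc, hn⟩)
      hvy
    rcases this.mpr (Or.inl hy) with h | ⟨u, hu, huv, hn⟩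
    · exact ⟨0, h⟩
    · rw [← vert_down hv huv]; exact hn
  -- find the critical edge
  obtain ⟨e2, he2, he2X, he2Y, y1, e1', y2, e2', p1, p2, p3, p4, p5, p1', p2', p3', p4', p5', hz⟩ :
      ∃ e2, IsEdge e2 ∧ e2 ∈ X' ∧ e2 ∉ X ∩ Z ∧ ∃ y1 e1' y2 e2',
        y1 ∈ X ∩ Z ∧ IsVert y1 ∧ IsEdge e1' ∧ fle y1 e1' ∧ CRel (X ∩ Zᶜ) e2 e1' ∧
        y2 ∈ X ∩ Z ∧ IsVert y2 ∧ IsEdge e2' ∧ fle y2 e2' ∧ CRel (X ∩ Zᶜ) e2 e2' ∧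
        (ZR (X ∩ Z) y1 y2 → ZR (X' \ {e2}) (en1 e2) (en2 e2)) := by
    by_cases hvex : ∃ v ∈ X', IsVert v ∧ v ∉ X ∩ Z
    · -- farthest vertex
      have hfin : {v | v ∈ X' ∧ IsVert v ∧ v ∉ X ∩ Z}.Finite :=
        H.fin.subset fun v hv => hXX hv.1
      obtain ⟨v, ⟨hvX, hv, hvY⟩, hmax⟩ := hfin.exists_maximalFor (dst X' (X ∩ Z)) _
        (by obtain ⟨v, h1, h2⟩ := hvex; exact ⟨v, h1, h2⟩)
      obtain ⟨e1, w1, q1, q2, q3, q4, q5, q6, q7, q8, q9⟩ := dst_step (hreach v hvX hv) hvY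
      obtain ⟨e2, r1, r2, r3, r4⟩ := hstuck v e1 hv q1 q4 q2 hvY
      have he2Y : e2 ∉ X ∩ Z := fun h => hvY (hYdown _ _ r2 h)
      obtain ⟨w2, hw2, hw2e, hw2v, hends⟩ : ∃ w2, IsVert w2 ∧ fle w2 e2 ∧ v ≠ w2 ∧
          (ZR (X' \ {e2}) v w2 → ZR (X' \ {e2}) (en1 e2) (en2 e2)) := by
        obtain ⟨-, -, k3, k4, -, -, k7, k8, -, k10⟩ := edge_facts r3
        rcases edge_vert r3 hv r2 with h | h
        · exact ⟨en2 e2, k4, k8, by rw [h]; exact k10, fun hh => by rw [← h]; exact hh⟩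
        · exact ⟨en1 e2, k3, k7, by rw [h]; exact k10.symm, fun hh => by rw [← h]; exact hh.symm⟩
      have hw2X : w2 ∈ X' := hdown _ _ hw2e r1
      have hdle : dst X' (X ∩ Z) w2 ≤ dst X' (X ∩ Z) v := by
        by_cases hw2Y : w2 ∈ X ∩ Z
        · exact (dst_le (n := 0) hw2Y).trans (Nat.zero_le _)
        · by_contra hlt
          exact hlt (hmax (j := w2) ⟨hw2X, hw2, hw2Y⟩ (by omega))
      obtain ⟨y1, e1', a1, a2, a3, a4, a5, a6⟩ :=
        descend H hXX e2 v r3 hv r2 _ w1 e1 le_rfl q6 q8 q1 q2 q3 q5 q7.symm q9.le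
      obtain ⟨y2, e2', b1, b2, b3, b4, b5, b6⟩ :=
        descend H hXX e2 v r3 hv r2 _ w2 e2 le_rfl hw2 (hreach w2 hw2X hw2) r3 r1 he2Y hw2e
          hw2v hdle
      have hS : ∀ c, c ∈ X' → c ∉ X ∩ Z → c ∈ X ∩ Zᶜ := fun c h1 h2 =>
        ⟨hXX h1, fun h => h2 ⟨hXX h1, h⟩⟩
      refine ⟨e2, r3, r1, he2Y, y1, e1', y2, e2', a1, a2, a3, a4, ?_, b1, b2, b3, b4, b5, ?_⟩
      · exact (CRel.of (hS v hvX hvY) (hS e2 r1 he2Y) r2).symm.trans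
          ((CRel.of (hS v hvX hvY) (hS e1 q2 q3) q4).trans a5)
      · intro hy
        apply hends
        have s1 : ZR (X' \ {e2}) v w1 := ZR.edge' (E := X' \ {e2}) q1 ⟨q2, fun h => r4 h.symm⟩ hv q6 q4 q5
        have s2 : ZR (X' \ {e2}) y1 y2 := hy.mono fun c hc =>
          (⟨hYX hc, by rintro rfl; exact he2Y hc⟩ : c ∈ X' \ {e2})
        exact s1.trans (a6.trans (s2.trans b6.symm))
    · push Not at hvex
      obtain ⟨c, hcX, hcY⟩ : ∃ c ∈ X', c ∉ X ∩ Z := by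
        by_contra hcon
        push Not at hcon
        exact hne (Set.Subset.antisymm hcon hYX)
      have hcE : IsEdge c := by
        rcases trichotomy c with h | h | h
        · exact absurd (hnof c h hcX) hcY
        · exact h
        · exact absurd (hvex c hcX h) hcY
      obtain ⟨-, -, k3, k4, -, -, k7, k8, -, k10⟩ := edge_facts hcE
      refine ⟨c, hcE, hcX, hcY, en1 c, c, en2 c, c, hvex _ (hdown _ _ k7 hcX) k3, k3, hcE, k7,
        CRel.refl _, hvex _ (hdown _ _ k8 hcX) k4, k4, hcE, k8, CRel.refl _, fun hy => ?_⟩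
      exact hy.mono fun d hd => (⟨hYX hd, by rintro rfl; exact hcY hd⟩ : d ∈ X' \ {c})
  have he2S : e2 ∈ X ∩ Zᶜ := ⟨hXX he2X, fun h => he2Y ⟨hXX he2X, h⟩⟩
  have hyy : CRel (X ∩ Z) y1 y2 :=
    H.F4 e1' e2' y1 y2 p3 p3' (p5.mem.1 he2S) (p5.symm.trans p5') p2 p2' p4 p4' p1 p1'
  have hcyc := hz (ZR.of_rel hYdown hyy p1 y1 y2 p2 p2' (fle_refl _) (fle_refl _))
  obtain ⟨f, hf, hfne⟩ := jordan (fun c hc => H.pos c (hXX hc)) he2 hcyc he2X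
  have side : ∀ s, IsFace s → fle e2 s → ∃ e t, IsEdge e ∧ CRel (X ∩ Zᶜ) e2 e ∧ IsFace t ∧
      fle e t ∧ t ∉ X ∧ f s = f t := by
    intro s hs hes
    by_cases hsX : s ∈ X
    · have hsX' : s ∉ X' := fun h => he2Y (hYdown _ _ hes (hnof s hs h))
      obtain ⟨e, t, q1, q2, q3⟩ := hinv f hf s hs hsX hsX'
      have hsS : s ∈ X ∩ Zᶜ := ⟨hsX, fun h => he2S.2 (H.hZ.down _ _ hes h)⟩
      exact ⟨e, t, q1, (CRel.of he2S hsS hes).trans q2, q3⟩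
    · exact ⟨e2, s, he2, CRel.refl _, hs, hes, hsX, rfl⟩
  obtain ⟨k1, k2, -, -, k5, k6, -, -, -, -⟩ := edge_facts he2
  obtain ⟨ea, ta, a1, a2, a3, a4, a5, a6⟩ := side _ k1 k5
  obtain ⟨eb, tb, b1, b2, b3, b4, b5, b6⟩ := side _ k2 k6
  have hT := H.F3 ea eb ta tb a1 b1 (a2.mem.1 he2S) (a2.symm.trans b2) a3 b3 a4 b4 a5 b5
  have := star_const (starry_compl H.hX H.hZ) f
    (hf.mono fun c hc h => hc.1 (hXX h)) hT
  rw [star_face a3, star_face b3] at this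
  exact hfne (a6.trans (this.trans b6.symm))

theorem comb_collapse {X Z : Set Cell} (H : Comb X Z) (D : Set Cell → Prop) (hDX : D X)
    (hD : ∀ X' t s, X' ⊆ X → DownSet X' → D X' → FreePair X' t s → D (X' \ {t, s}))
    (hR : ∀ X', X ∩ Z ⊆ X' → X' ⊆ X → DownSet X' → D X' → ∀ c ∈ X', ∃ y ∈ X ∩ Z, CRel X' c y) :
    D (X ∩ Z) := by
  have main : ∀ n X', X'.ncard = n → X ∩ Z ⊆ X' → X' ⊆ X → DownSet X' → D X' → TNInv X Z X' →
      D (X ∩ Z) := by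
    intro n
    induction n using Nat.strong_induction_on with
    | _ n ih =>
      intro X' hn hYX hXX hdown hDX' hinv
      by_cases hne : X' = X ∩ Z
      · rw [← hne]; exact hDX'
      have hex : ∃ t s, FreePair X' t s ∧ t ∉ X ∩ Z ∧ TNInv X Z (X' \ {t, s}) := by
        by_cases hf : ∃ s, IsFace s ∧ s ∈ X' ∧ s ∉ X ∩ Z
        · obtain ⟨s, h1, h2, h3⟩ := hf
          exact free_face H hXX hdown hinv s h1 h2 (fun h => h3 ⟨hXX h2, h⟩)
        · push Not at hf
          exact free_vert H hYX hXX hdown hinv (hR X' hYX hXX hdown hDX') hf hne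
      obtain ⟨t, s, hfree, htY, hinv'⟩ := hex
      have hsub : X' \ {t, s} ⊆ X' := sdiff_subset
      have hfin : X'.Finite := H.fin.subset hXX
      obtain ⟨f1, f2, f3, f4, f5⟩ := hfree
      refine ih (X' \ {t, s}).ncard ?_ (X' \ {t, s}) rfl ?_ (hsub.trans hXX) ?_
        (hD X' t s hXX hdown hDX' ⟨f1, f2, f3, f4, f5⟩) hinv'
      · rw [← hn]
        exact Set.ncard_lt_ncard ⟨hsub, fun h => (h f1).2 (Or.inr rfl)⟩ hfin
      · intro c hc
        refine ⟨hYX hc, ?_⟩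
        rintro (h | h)
        · exact htY (h ▸ hc)
        · rw [h] at hc
          exact htY ⟨H.hX.down _ _ f2 hc.1, H.hZ.down _ _ f2 hc.2⟩
      · intro c d hcd hd
        refine ⟨hdown _ _ hcd hd.1, ?_⟩
        rintro (h | h)
        · rw [h] at hcd
          rcases f5 d hd.1 hcd with h | h
          · exact hd.2 (Or.inl h)
          · exact hd.2 (Or.inr h)
        · rw [h] at hcd
          rcases f5 d hd.1 (fle_trans f2 hcd) with h | h
          · exact hd.2 (Or.inl h)
          · exact hd.2 (Or.inr h)
  refine main _ X rfl inter_subset_left subset_rfl H.hX.down hDX ?_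
  intro f _ r _ h1 h2
  exact absurd h1 h2

/-! ### Realization of cells in the plane -/

open Topology Filter in
/-- A locally finite family of grid lines `L k`, and the function giving the cell of a number. -/
structure Grid where
  L : ℤ → ℝ
  idx : ℝ → ℤ
  h1 : ∀ k x, 2 * k ≤ idx x ↔ L k ≤ x
  h2 : ∀ k x, idx x ≤ 2 * k ↔ x ≤ L k

namespace Grid
variable (g : Grid)

lemma idx_L (k : ℤ) : g.idx (g.L k) = 2 * k :=
  le_antisymm ((g.h2 _ _).2 le_rfl) ((g.h1 _ _).2 le_rfl)

lemma L_lt {k m : ℤ} : g.L k < g.L m ↔ k < m := by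
  rw [← not_le, ← not_le, ← g.h1, g.idx_L]; omega

lemma idx_even {k : ℤ} {x : ℝ} : g.idx x = 2 * k ↔ x = g.L k := by
  constructor
  · intro h
    exact le_antisymm ((g.h2 _ _).1 h.le) ((g.h1 _ _).1 h.ge)
  · rintro rfl; exact g.idx_L k

lemma idx_gt {k : ℤ} {x : ℝ} : 2 * k < g.idx x ↔ g.L k < x := by
  rw [← not_le, g.h2, not_le]

lemma idx_lt {k : ℤ} {x : ℝ} : g.idx x < 2 * k ↔ x < g.L k := by
  rw [← not_le, g.h1, not_le]

lemma idx_odd {k : ℤ} {x : ℝ} : g.idx x = 2 * k + 1 ↔ x ∈ Ioo (g.L k) (g.L (k + 1)) := by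
  rw [mem_Ioo, ← g.idx_gt, ← g.idx_lt]; omega

open Topology in
lemma near (x : ℝ) : ∀ᶠ y in 𝓝 x, le1 (g.idx x) (g.idx y) := by
  obtain ⟨k, hk | hk⟩ : ∃ k, g.idx x = 2 * k ∨ g.idx x = 2 * k + 1 := ⟨g.idx x / 2, by omega⟩
  · have hx : x ∈ Ioo (g.L (k - 1)) (g.L (k + 1)) := by
      rw [mem_Ioo, ← g.idx_gt, ← g.idx_lt]; omega
    filter_upwards [Ioo_mem_nhds hx.1 hx.2] with y hy
    rw [mem_Ioo, ← g.idx_gt, ← g.idx_lt] at hy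
    unfold le1; omega
  · have hx := g.idx_odd.1 hk
    filter_upwards [Ioo_mem_nhds hx.1 hx.2] with y hy
    rw [← g.idx_odd] at hy
    unfold le1; omega

def I (a : ℤ) : Set ℝ := {x | g.idx x = a}

lemma I_even (k : ℤ) : g.I (2 * k) = {g.L k} := by
  ext x; exact g.idx_even

lemma I_odd (k : ℤ) : g.I (2 * k + 1) = Ioo (g.L k) (g.L (k + 1)) := by
  ext x; exact g.idx_odd

lemma even_or (a : ℤ) : ∃ k, a = 2 * k ∨ a = 2 * k + 1 := ⟨a / 2, by omega⟩

lemma I_nonempty (a : ℤ) : (g.I a).Nonempty := by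
  obtain ⟨k, rfl | rfl⟩ := even_or a
  · rw [I_even]; exact singleton_nonempty _
  · rw [I_odd]; exact nonempty_Ioo.2 (g.L_lt.2 (by omega))

lemma I_convex (a : ℤ) : Convex ℝ (g.I a) := by
  obtain ⟨k, rfl | rfl⟩ := even_or a
  · rw [I_even]; exact convex_singleton _
  · rw [I_odd]; exact convex_Ioo _ _

lemma I_infinite (a : ℤ) (ha : a % 2 = 1) : (g.I a).Infinite := by
  obtain ⟨k, rfl | rfl⟩ := even_or a
  · omega
  · rw [I_odd]; exact Ioo_infinite (g.L_lt.2 (by omega))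

lemma closure_I (a : ℤ) : closure (g.I a) = {x | le1 (g.idx x) a} := by
  obtain ⟨k, rfl | rfl⟩ := even_or a
  · rw [I_even, closure_singleton]
    ext x
    simp only [mem_singleton_iff, mem_ofPred_eq, ← g.idx_even]
    unfold le1; omega
  · rw [I_odd, closure_Ioo (g.L_lt.2 (by omega)).ne]
    ext x
    simp only [mem_Icc, mem_ofPred_eq, ← g.h1, ← g.h2]
    unfold le1; omega

/-- The cell containing a point. -/
def cellOf (x : Plane) : Cell := (g.idx (x 0), g.idx (x 1))

/-- The union of the open cells in `S`. -/
def rl (S : Set Cell) : Set Plane := {x | g.cellOf x ∈ S}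

open Topology in
lemma near2 (x : Plane) : ∀ᶠ y in 𝓝 x, fle (g.cellOf x) (g.cellOf y) := by
  have h0 : ∀ᶠ y : Plane in 𝓝 x, le1 (g.idx (x 0)) (g.idx (y 0)) :=
    (continuous_apply (0 : Fin 2)).continuousAt.eventually (g.near (x 0))
  have h1 : ∀ᶠ y : Plane in 𝓝 x, le1 (g.idx (x 1)) (g.idx (y 1)) :=
    (continuous_apply (1 : Fin 2)).continuousAt.eventually (g.near (x 1))
  filter_upwards [h0, h1] with y hy0 hy1
  exact ⟨hy0, hy1⟩

lemma rl_single (d : Cell) : g.rl {d} = Set.pi univ ![g.I d.1, g.I d.2] := by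
  ext x
  simp [rl, cellOf, I, Prod.ext_iff]

lemma rl_nonempty (d : Cell) : ∃ x, g.cellOf x = d := by
  obtain ⟨a, ha⟩ := g.I_nonempty d.1
  obtain ⟨b, hb⟩ := g.I_nonempty d.2
  exact ⟨![a, b], Prod.ext ha hb⟩

lemma rl_convex (d : Cell) : Convex ℝ (g.rl {d}) := by
  rw [rl_single]
  apply convex_pi
  intro i _
  fin_cases i
  · exact g.I_convex _
  · exact g.I_convex _

lemma closure_rl_single (d : Cell) : closure (g.rl {d}) = {x | fle (g.cellOf x) d} := by
  rw [rl_single, closure_pi_set]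
  ext x
  simp [closure_I, fle, cellOf]

lemma rl_mono {S T : Set Cell} (h : S ⊆ T) : g.rl S ⊆ g.rl T := fun _ hx => h hx

lemma closure_rl (S : Set Cell) : closure (g.rl S) = g.rl {c | ∃ d ∈ S, fle c d} := by
  apply Subset.antisymm
  · intro x hx
    obtain ⟨y, hy, hyS⟩ := (mem_closure_iff_nhds.1 hx) _ (g.near2 x)
    exact ⟨_, hyS, hy⟩
  · rintro x ⟨d, hd, hxd⟩
    have : x ∈ closure (g.rl {d}) := by rw [closure_rl_single]; exact hxd
    exact closure_mono (g.rl_mono (singleton_subset_iff.2 hd)) this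

lemma rl_closed {S : Set Cell} (h : DownSet S) : IsClosed (g.rl S) := by
  apply isClosed_of_closure_subset
  rw [closure_rl]
  rintro x ⟨d, hd, hxd⟩
  exact h _ _ hxd hd

lemma const {S : Set Cell} (p : Cell → Prop) (hp : ∀ c d, c ∈ S → d ∈ S → fle c d → p c = p d)
    {U : Set Plane} (hU : IsPreconnected U) (hUS : U ⊆ g.rl S) {x y : Plane} (hx : x ∈ U)
    (hy : y ∈ U) : p (g.cellOf x) = p (g.cellOf y) := by
  classical
  have hc : ContinuousOn (fun x => decide (p (g.cellOf x))) U := by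
    intro x hx
    refine ContinuousWithinAt.congr_of_eventuallyEq (f := fun _ => decide (p (g.cellOf x)))
      continuousWithinAt_const ?_ rfl
    filter_upwards [mem_nhdsWithin_of_mem_nhds (g.near2 x), self_mem_nhdsWithin] with y hy hyU
    have := hp _ _ (hUS hx) (hUS hyU) hy
    simp [this]
  have := hU.constant hc hx hy
  simpa using this

lemma comp_eq_of_rel {S : Set Cell} {c d : Cell} (h : CRel S c d) : c ∈ S → ∀ x y : Plane,
    g.cellOf x = c → g.cellOf y = d →
    connectedComponentIn (g.rl S) x = connectedComponentIn (g.rl S) y := by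
  have single : ∀ (d : Cell), d ∈ S → ∀ x y : Plane, fle (g.cellOf x) d → g.cellOf x ∈ S →
      g.cellOf y = d →
      connectedComponentIn (g.rl S) x = connectedComponentIn (g.rl S) y := by
    intro d hd x y hx hxS hy
    have hpre : IsPreconnected (g.rl {d} ∪ {x}) := by
      refine (g.rl_convex d).isPreconnected.subset_closure subset_union_left ?_
      refine union_subset subset_closure ?_
      rw [closure_rl_single]
      simpa using hx
    have hsub : g.rl {d} ∪ {x} ⊆ g.rl S := by
      refine union_subset (g.rl_mono (singleton_subset_iff.2 hd)) ?_
      simpa [rl] using hxS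
    have := hpre.subset_connectedComponentIn (x := x) (Or.inr rfl) hsub
    exact connectedComponentIn_eq (this (Or.inl hy))
  induction h with
  | rel c d h =>
    intro _ x y hx hy
    exact single d h.2.1 x y (hx ▸ h.2.2) (hx ▸ h.1) hy
  | refl c =>
    intro hc x y hx hy
    exact single c hc x y (hx ▸ fle_refl _) (hx ▸ hc) hy
  | symm c d h ih =>
    intro hd x y hx hy
    exact (ih (CRel.mem h |>.2 hd) y x hy hx).symm
  | trans c d e h h' ih1 ih2 =>
    intro hc x y hx hy
    obtain ⟨z, hz⟩ := g.rl_nonempty d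
    exact (ih1 hc x z hx hz).trans (ih2 (CRel.mem h |>.1 hc) z y hz hy)

lemma comp_eq {S : Set Cell} {x : Plane} (hx : x ∈ g.rl S) :
    connectedComponentIn (g.rl S) x = g.rl {d | CRel S (g.cellOf x) d} := by
  apply Subset.antisymm
  · intro y hy
    have := g.const (fun d => CRel S (g.cellOf x) d) (S := S)
      (fun c d hc hd hcd => propext ⟨fun h => h.trans (CRel.of hc hd hcd),
        fun h => h.trans (CRel.of hc hd hcd).symm⟩)
      isPreconnected_connectedComponentIn (connectedComponentIn_subset (g.rl S) x)
      (mem_connectedComponentIn hx) hy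
    exact this.mp (CRel.refl _)
  · intro y hy
    rw [g.comp_eq_of_rel hy hx x y rfl rfl]
    exact mem_connectedComponentIn ((CRel.mem hy).1 hx)

lemma isCompOf_iff {S : Set Cell} {C : Set Plane} :
    IsCompOf C (g.rl S) ↔ ∃ c ∈ S, C = g.rl {d | CRel S c d} := by
  constructor
  · rintro ⟨x, hx, rfl⟩
    exact ⟨g.cellOf x, hx, g.comp_eq hx⟩
  · rintro ⟨c, hc, rfl⟩
    obtain ⟨x, rfl⟩ := g.rl_nonempty c
    exact ⟨x, hc, (g.comp_eq hc).symm⟩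

lemma rl_inj {S T : Set Cell} (h : g.rl S = g.rl T) : S = T := by
  ext c
  obtain ⟨x, rfl⟩ := g.rl_nonempty c
  exact Set.ext_iff.1 h x

lemma rl_single_infinite {e : Cell} (he : ¬ IsVert e) : (g.rl {e}).Infinite := by
  obtain ⟨a, ha⟩ := g.I_nonempty e.1
  obtain ⟨b, hb⟩ := g.I_nonempty e.2
  have : e.1 % 2 = 1 ∨ e.2 % 2 = 1 := by unfold IsVert at he; omega
  rcases this with h | h
  · refine ((g.I_infinite _ h).image (f := fun t : ℝ => (![t, b] : Plane)) ?_).mono ?_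
    · intro s _ t _ hst
      exact congrFun hst 0
    · rintro _ ⟨t, ht, rfl⟩
      exact Prod.ext ht hb
  · refine ((g.I_infinite _ h).image (f := fun t : ℝ => (![a, t] : Plane)) ?_).mono ?_
    · intro s _ t _ hst
      exact congrFun hst 1
    · rintro _ ⟨t, ht, rfl⟩
      exact Prod.ext ha ht

lemma eq_of_vert {x y : Plane} (h : g.cellOf x = g.cellOf y) (hv : IsVert (g.cellOf x)) : x = y := by
  obtain ⟨v0, v1⟩ := hv
  have h0 : g.idx (x 0) = g.idx (y 0) := congrArg Prod.fst h
  have h1 : g.idx (x 1) = g.idx (y 1) := congrArg Prod.snd h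
  simp only [cellOf] at v0 v1
  funext i
  fin_cases i
  · obtain ⟨k, hk⟩ : ∃ k, g.idx (x 0) = 2 * k := ⟨g.idx (x 0) / 2, by omega⟩
    exact (g.idx_even.1 hk).trans (g.idx_even.1 (h0 ▸ hk)).symm
  · obtain ⟨k, hk⟩ : ∃ k, g.idx (x 1) = 2 * k := ⟨g.idx (x 1) / 2, by omega⟩
    exact (g.idx_even.1 hk).trans (g.idx_even.1 (h1 ▸ hk)).symm

lemma exists_edge_of_infinite {W X : Set Cell} (hX : X.Finite) (hW : W ⊆ X)
    (h : (g.rl W).Infinite) : ∃ e ∈ W, ¬ IsVert e := by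
  by_contra hcon
  push Not at hcon
  apply h
  refine Set.Finite.of_finite_image (f := g.cellOf) ((hX.subset hW).subset ?_) ?_
  · rintro _ ⟨x, hx, rfl⟩; exact hx
  · intro x hx y _ hxy
    exact g.eq_of_vert hxy (hcon _ hx)

end Grid

/-! ### From regular components to the combinatorial conditions -/

namespace Grid
variable (g : Grid)

lemma shares_imp {U V X : Set Cell} (hX : X.Finite) (hd : DownSet X) (hV : V ⊆ X)
    (h : SharesEdge (g.rl U) (g.rl V)) :
    ∃ e u v, ¬ IsVert e ∧ u ∈ U ∧ v ∈ V ∧ fle e u ∧ fle e v := by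
  unfold SharesEdge at h
  rw [closure_rl, closure_rl] at h
  obtain ⟨e, ⟨⟨u, hu, hu'⟩, ⟨v, hv, hv'⟩⟩, he⟩ := g.exists_edge_of_infinite (X := X)
    (W := {c | ∃ d ∈ U, fle c d} ∩ {c | ∃ d ∈ V, fle c d}) hX
    (by rintro c ⟨-, v, hv, hv'⟩; exact hd _ _ hv' (hV hv)) h
  exact ⟨e, u, v, he, hu, hv, hu', hv'⟩

lemma shares_of {U V : Set Cell} {e u v : Cell} (he : ¬ IsVert e) (hu : u ∈ U) (hv : v ∈ V)
    (hu' : fle e u) (hv' : fle e v) : SharesEdge (g.rl U) (g.rl V) := by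
  unfold SharesEdge
  rw [closure_rl, closure_rl]
  refine (g.rl_single_infinite he).mono ?_
  intro x hx
  have hx : g.cellOf x = e := hx
  exact ⟨⟨u, hu, hx ▸ hu'⟩, ⟨v, hv, hx ▸ hv'⟩⟩

lemma unique_rel {S V : Set Cell} (h : ∃! T, IsCompOf T (g.rl S) ∧ SharesEdge T (g.rl V))
    {e u v e' u' v' : Cell} (he : ¬ IsVert e) (hu : u ∈ S) (hv : v ∈ V)
    (h1 : fle e u) (h2 : fle e v) (he' : ¬ IsVert e') (hu' : u' ∈ S) (hv' : v' ∈ V)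
    (h1' : fle e' u') (h2' : fle e' v') : CRel S u u' := by
  have a1 : IsCompOf (g.rl {d | CRel S u d}) (g.rl S) := g.isCompOf_iff.2 ⟨u, hu, rfl⟩
  have a2 : IsCompOf (g.rl {d | CRel S u' d}) (g.rl S) := g.isCompOf_iff.2 ⟨u', hu', rfl⟩
  have := h.unique ⟨a1, g.shares_of he (CRel.refl u) hv h1 h2⟩
    ⟨a2, g.shares_of he' (CRel.refl u') hv' h1' h2'⟩
  have := g.rl_inj this
  have h3 : u' ∈ {d | CRel S u' d} := CRel.refl u'
  rw [← this] at h3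
  exact h3

lemma exists_rel {S V X : Set Cell} (hX : X.Finite) (hd : DownSet X) (hV : V ⊆ X)
    (h : ∃! T, IsCompOf T (g.rl S) ∧ SharesEdge T (g.rl V)) :
    ∃ e u v, ¬ IsVert e ∧ u ∈ S ∧ v ∈ V ∧ fle e u ∧ fle e v := by
  obtain ⟨T, ⟨hT, hs⟩, -⟩ := h
  obtain ⟨t, ht, rfl⟩ := g.isCompOf_iff.1 hT
  obtain ⟨e, u, v, he, hu, hv, h1, h2⟩ := g.shares_imp hX hd hV hs
  exact ⟨e, u, v, he, (CRel.mem hu).1 ht, hv, h1, h2⟩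

theorem comb_of_reg {X Z : Set Cell} (hX : Nice X) (hZ : Nice Z) (fin : X.Finite)
    (pos : ∀ c ∈ X, 0 ≤ c.1)
    (H : ∀ C, IsCompOf C (g.rl (X ∩ Zᶜ)) →
      (∃! T, IsCompOf T (g.rl (X ∩ Z)) ∧ SharesEdge T C) ∧
      (∃! T, IsCompOf T (g.rl (Xᶜ ∩ Zᶜ)) ∧ SharesEdge T C)) : Comb X Z := by
  have H' : ∀ c ∈ X ∩ Zᶜ, 
      (∃! T, IsCompOf T (g.rl (X ∩ Z)) ∧ SharesEdge T (g.rl {d | CRel (X ∩ Zᶜ) c d})) ∧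
      (∃! T, IsCompOf T (g.rl (Xᶜ ∩ Zᶜ)) ∧ SharesEdge T (g.rl {d | CRel (X ∩ Zᶜ) c d})) :=
    fun c hc => H _ (g.isCompOf_iff.2 ⟨c, hc, rfl⟩)
  have hsub : ∀ c ∈ X ∩ Zᶜ, {d | CRel (X ∩ Zᶜ) c d} ⊆ X :=
    fun c hc d hd => ((CRel.mem hd).1 hc).1
  refine ⟨hX, hZ, fin, pos, ?_, ?_, ?_, ?_⟩
  · intro c hc
    obtain ⟨e, u, v, he, hu, hv, h1, h2⟩ := g.exists_rel fin hX.down (hsub c hc) (H' c hc).2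
    have hvm := (CRel.mem hv).1 hc
    have heX : e ∈ X := hX.down _ _ h2 hvm.1
    have hne : u ≠ e := fun h => hu.1 (h ▸ heX)
    have hedge : IsEdge e := by
      rcases trichotomy e with h | h | h
      · exact absurd (face_max h h1) hne
      · exact h
      · exact absurd h he
    have huf : IsFace u := (edge_up hedge h1).resolve_left hne
    by_cases heZ : e ∈ Z
    · exfalso
      have hs : cstar e ∈ X ∩ Z := (Starry.cstar (starry_inter hX hZ) e).2 ⟨heX, heZ⟩
      have hsf := isFace_star e
      have hse := fle_star e
      have hvf : IsFace v := (edge_up hedge h2).resolve_left (fun h => hvm.2 (h ▸ heZ))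
      have n1 : u ≠ v := fun h => hu.1 (h ▸ hvm.1)
      have n2 : u ≠ cstar e := fun h => hu.1 (h ▸ hs.1)
      have n3 : v ≠ cstar e := fun h => hvm.2 (h ▸ hs.2)
      rcases edge_face hedge huf h1 with a | a <;> rcases edge_face hedge hvf h2 with b | b <;>
        rcases edge_face hedge hsf hse with d | d <;> simp_all
    · exact ⟨e, u, hedge, CRel.trans hv (CRel.of (S := X ∩ Zᶜ) ⟨heX, heZ⟩ hvm h2).symm, huf, h1, hu.1⟩
  · intro c hc
    obtain ⟨e, u, v, he, hu, hv, h1, h2⟩ := g.exists_rel fin hX.down (hsub c hc) (H' c hc).1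
    exact ⟨v, e, hv, ⟨hX.down _ _ h1 hu.1, hZ.down _ _ h1 hu.2⟩, h2⟩
  · intro e e' t t' he he' heX hr ht ht' h1 h2 htX htX'
    have heX' := (CRel.mem hr).1 heX
    exact g.unique_rel (H' e heX).2 (edge_not he).2
      ⟨htX, fun h => heX.2 (hZ.down _ _ h1 h)⟩ (CRel.refl e) h1 (fle_refl e)
      (edge_not he').2 ⟨htX', fun h => heX'.2 (hZ.down _ _ h2 h)⟩ hr h2 (fle_refl e')
  · intro e e' y y' he he' heX hr hy hy' h1 h2 hyY hyY'
    have heX' := (CRel.mem hr).1 heX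
    have key : ∀ e y : Cell, IsEdge e → e ∈ X ∩ Zᶜ → IsVert y → fle y e → y ∈ X ∩ Z →
        ∃ k m, ¬ IsVert k ∧ k ∈ X ∩ Z ∧ CRel (X ∩ Z) y k ∧ CRel (X ∩ Zᶜ) e m ∧ fle k m := by
      rintro ⟨x, b'⟩ ⟨a, b⟩ he heX ⟨hy1, hy2⟩ hye hyY
      unfold IsEdge at he
      simp only at he hy1 hy2
      have sa := st_spec a
      have sb := st_spec b
      have hye' := hye
      unfold fle le1 at hye'
      simp only at hye'
      rcases (by omega : (b' = b) ∨ x = a) with h | h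
      · subst h
        refine ⟨(a, st b'), (x, st b'), ?_, ((starry_inter hX hZ).s2 _ _).2 hyY, ?_, ?_, ?_⟩
        · unfold IsVert; simp only; omega
        · exact CRel.of hyY (((starry_inter hX hZ).s2 _ _).2 hyY) ⟨le1_refl _, sb.2.1⟩
        · exact CRel.of heX (((starry_diff hX hZ).s2 _ _).2 heX) ⟨le1_refl _, sb.2.1⟩
        · exact ⟨hye.1, le1_refl _⟩
      · subst h
        refine ⟨(st x, b), (st x, b'), ?_, ((starry_inter hX hZ).s1 _ _).2 hyY, ?_, ?_, ?_⟩
        · unfold IsVert; simp only; omega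
        · exact CRel.of hyY (((starry_inter hX hZ).s1 _ _).2 hyY) ⟨sa.2.1, le1_refl _⟩
        · exact CRel.of heX (((starry_diff hX hZ).s1 _ _).2 heX) ⟨sa.2.1, le1_refl _⟩
        · exact ⟨le1_refl _, hye.2⟩
    obtain ⟨k, m, n1, n2, n3, n4, n5⟩ := key e y he heX hy h1 hyY
    obtain ⟨k', m', n1', n2', n3', n4', n5'⟩ := key e' y' he' heX' hy' h2 hyY'
    have := g.unique_rel (H' e heX).1 n1 n2 n4 (fle_refl k) n5 n1' n2'
      (CRel.trans hr n4') (fle_refl k') n5'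
    exact (n3.trans this).trans n3'.symm

end Grid

/-! ### Elementary collapses are homotopy equivalences -/

open ContinuousMap in
lemma conv_collapse {U K : Set Plane} (hU : IsClosed U) (hK : IsClosed K) (hc : Convex ℝ K)
    (r : Plane → Plane) (hr : ContinuousOn r K) (hm : ∀ x ∈ K, r x ∈ K ∧ r x ∈ U)
    (hid : ∀ x ∈ K, x ∈ U → r x = x) :
    ∃ ρ : Plane → Plane, ContinuousOn ρ (U ∪ K) ∧ (∀ x ∈ U ∪ K, ρ x ∈ U) ∧ (∀ x ∈ U, ρ x = x) ∧
      Nonempty (HomotopyEquiv ↥(U ∪ K) ↥U) := by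
  classical
  obtain ⟨ρ, hρU, hρN⟩ : ∃ ρ : Plane → Plane, (∀ x ∈ U, ρ x = x) ∧ ∀ x ∉ U, ρ x = r x :=
    ⟨fun x => if x ∈ U then x else r x, fun x hx => if_pos hx, fun x hx => if_neg hx⟩
  have hρK : ∀ x ∈ K, ρ x = r x := by
    intro x hx
    by_cases h : x ∈ U
    · rw [hρU x h, hid x hx h]
    · exact hρN x h
  have hρc : ContinuousOn ρ (U ∪ K) := by
    refine ContinuousOn.union_of_isClosed ?_ ?_ hU hK
    · exact continuousOn_id.congr hρU
    · exact hr.congr hρK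
  have hρm : ∀ x ∈ U ∪ K, ρ x ∈ U := by
    rintro x (hx | hx)
    · rw [hρU x hx]; exact hx
    · rw [hρK x hx]; exact (hm x hx).2
  refine ⟨ρ, hρc, hρm, hρU, ?_⟩
  let F : C(↥(U ∪ K), ↥U) := ⟨fun x => ⟨ρ x, hρm x x.2⟩,
    Continuous.subtype_mk (continuousOn_iff_continuous_domRestrict.1 hρc) _⟩
  let J : C(↥U, ↥(U ∪ K)) := ⟨fun x => ⟨x, Or.inl x.2⟩, by fun_prop⟩
  have hmem : ∀ (t : unitInterval) (x : ↥(U ∪ K)),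
      (1 - (t : ℝ)) • ρ x + (t : ℝ) • (x : Plane) ∈ U ∪ K := by
    rintro t ⟨x, hx⟩
    by_cases h : x ∈ U
    · simp only [hρU x h]
      rw [← add_smul]
      left
      simpa using h
    · right
      have hxK := hx.resolve_left h
      simp only [hρK x hxK]
      exact hc (hm x hxK).1 hxK (by linarith [t.2.2]) t.2.1 (by ring)
  have hcont : Continuous fun x : ↥(U ∪ K) => ρ x := continuousOn_iff_continuous_domRestrict.1 hρc
  refine ⟨⟨F, J, ⟨⟨⟨fun z => ⟨_, hmem z.1 z.2⟩, ?_⟩, ?_, ?_⟩⟩, ?_⟩⟩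
  · apply Continuous.subtype_mk
    have h2 : Continuous fun z : unitInterval × ↥(U ∪ K) => ρ z.2 :=
      hcont.comp (continuous_snd (X := unitInterval))
    have h3 : Continuous fun z : unitInterval × ↥(U ∪ K) => (z.1 : ℝ) :=
      continuous_subtype_val.comp continuous_fst
    have h4 : Continuous fun z : unitInterval × ↥(U ∪ K) => (z.2 : Plane) :=
      continuous_subtype_val.comp continuous_snd
    exact ((continuous_const.sub h3).smul h2).add (h3.smul h4)
  · intro x
    apply Subtype.ext
    change (1 - ((0 : unitInterval) : ℝ)) • ρ x + ((0 : unitInterval) : ℝ) • (x : Plane) = ρ x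
    simp
  · intro x
    apply Subtype.ext
    simp
  · have : F.comp J = ContinuousMap.id _ := by
      ext1 x
      apply Subtype.ext
      exact hρU x x.2
    rw [this]

/-- The radial retraction of a square onto three sides. -/
lemma square_ret (v u : ℝ) (hv : v ∈ Icc (0 : ℝ) 1) (hu : u ∈ Icc (-1 : ℝ) 1) :
    0 < max |u| ((2 - v) / 2) ∧
    2 + (v - 2) / max |u| ((2 - v) / 2) ∈ Icc (0 : ℝ) 1 ∧
    u / max |u| ((2 - v) / 2) ∈ Icc (-1 : ℝ) 1 ∧
    (2 + (v - 2) / max |u| ((2 - v) / 2) = 0 ∨ u / max |u| ((2 - v) / 2) = 1 ∨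
      u / max |u| ((2 - v) / 2) = -1) ∧
    (v = 0 ∨ u = 1 ∨ u = -1 → 2 + (v - 2) / max |u| ((2 - v) / 2) = v ∧
      u / max |u| ((2 - v) / 2) = u) := by
  obtain ⟨hv0, hv1⟩ := hv
  obtain ⟨hu0, hu1⟩ := hu
  have hau : |u| ≤ 1 := abs_le.2 ⟨hu0, hu1⟩
  have h1 : |u| ≤ max |u| ((2 - v) / 2) := le_max_left _ _
  have h2 : (2 - v) / 2 ≤ max |u| ((2 - v) / 2) := le_max_right _ _
  have h3 : max |u| ((2 - v) / 2) ≤ 1 := max_le hau (by linarith)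
  have h4 : max |u| ((2 - v) / 2) = |u| ∨ max |u| ((2 - v) / 2) = (2 - v) / 2 := max_choice _ _
  have h5 : v = 0 ∨ u = 1 ∨ u = -1 → max |u| ((2 - v) / 2) = 1 := by
    rintro (h | h | h)
    · apply le_antisymm h3; linarith
    · apply le_antisymm h3; rw [h, abs_one] at h1 ⊢; linarith
    · apply le_antisymm h3; rw [h, abs_neg, abs_one] at h1 ⊢; linarith
  generalize max |u| ((2 - v) / 2) = m at *
  have hm : 0 < m := by linarith
  obtain ⟨ha, hb⟩ := abs_le.1 h1
  refine ⟨hm, ⟨?_, ?_⟩, ⟨?_, ?_⟩, ?_, ?_⟩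
  · have : -2 ≤ (v - 2) / m := by rw [le_div_iff₀ hm]; linarith
    linarith
  · have : (v - 2) / m ≤ -1 := by rw [div_le_iff₀ hm]; linarith
    linarith
  · rw [le_div_iff₀ hm]; linarith
  · rw [div_le_iff₀ hm]; linarith
  · rcases h4 with h | h
    · right
      rcases abs_choice u with h' | h'
      · left; rw [div_eq_iff hm.ne']; linarith
      · right; rw [div_eq_iff hm.ne']; linarith
    · left
      have : (v - 2) / m = -2 := by rw [div_eq_iff hm.ne']; linarith
      linarith
  · intro h
    rw [h5 h]; simp

namespace Grid
variable (g : Grid)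

lemma coord_free (τ σ : ℤ) (h : le1 τ σ) (hne : τ ≠ σ) : ∃ p q : ℝ, p ≠ q ∧
    (∀ y, le1 (g.idx y) σ ↔ (y - q) / (p - q) ∈ Icc (0 : ℝ) 1) ∧
    (g.idx q ≠ τ ∧ g.idx q ≠ σ) ∧ (∀ y, le1 (g.idx y) σ → g.idx y ≠ τ → g.idx y ≠ σ → y = q) := by
  obtain ⟨k, rfl | rfl⟩ := even_or τ
  swap
  · unfold le1 at h; omega
  rcases (by unfold le1 at h; omega : σ = 2 * k + 1 ∨ σ = 2 * (k - 1) + 1) with rfl | rfl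
  · have hl : g.L k < g.L (k + 1) := g.L_lt.2 (by omega)
    refine ⟨g.L k, g.L (k + 1), hl.ne, ?_, ?_, ?_⟩
    · intro y
      have : 0 < g.L (k + 1) - g.L k := by linarith
      rw [← neg_div_neg_eq, neg_sub, neg_sub, mem_Icc, le_div_iff₀ this, div_le_one this]
      have e1 := g.h1 k y
      have e2 := g.h2 (k + 1) y
      constructor
      · intro h
        have := e1.1 (by unfold le1 at h; omega)
        have := e2.1 (by unfold le1 at h; omega)
        constructor <;> linarith
      · rintro ⟨h, h'⟩
        have := e1.2 (by linarith)
        have := e2.2 (by linarith)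
        unfold le1; omega
    · rw [g.idx_L]; omega
    · intro y h1 h2 h3
      rw [← g.idx_even]; unfold le1 at h1; omega
  · have hl : g.L (k - 1) < g.L k := g.L_lt.2 (by omega)
    refine ⟨g.L k, g.L (k - 1), hl.ne', ?_, ?_, ?_⟩
    · intro y
      have : 0 < g.L k - g.L (k - 1) := by linarith
      rw [mem_Icc, le_div_iff₀ this, div_le_one this]
      have e1 := g.h1 (k - 1) y
      have e2 := g.h2 k y
      constructor
      · intro h
        have := e1.1 (by unfold le1 at h; omega)
        have := e2.1 (by unfold le1 at h; omega)
        constructor <;> linarith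
      · rintro ⟨h, h'⟩
        have := e1.2 (by linarith)
        have := e2.2 (by linarith)
        unfold le1; omega
    · rw [g.idx_L]; omega
    · intro y h1 h2 h3
      rw [← g.idx_even]; unfold le1 at h1; omega

lemma coord_odd (β : ℤ) (h : β % 2 = 1) : ∃ γ δ : ℝ, γ < δ ∧
    (∀ y, le1 (g.idx y) β ↔ (2 * y - γ - δ) / (δ - γ) ∈ Icc (-1 : ℝ) 1) ∧
    (g.idx γ ≠ β ∧ g.idx δ ≠ β) ∧ (∀ y, le1 (g.idx y) β → g.idx y ≠ β → y = γ ∨ y = δ) := by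
  obtain ⟨k, rfl | rfl⟩ := even_or β
  · omega
  have hl : g.L k < g.L (k + 1) := g.L_lt.2 (by omega)
  refine ⟨g.L k, g.L (k + 1), hl, ?_, ?_, ?_⟩
  · intro y
    have : 0 < g.L (k + 1) - g.L k := by linarith
    rw [mem_Icc, le_div_iff₀ this, div_le_one this]
    have e1 := g.h1 k y
    have e2 := g.h2 (k + 1) y
    constructor
    · intro h
      have := e1.1 (by unfold le1 at h; omega)
      have := e2.1 (by unfold le1 at h; omega)
      constructor <;> linarith
    · rintro ⟨h, h'⟩
      have := e1.2 (by linarith)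
      have := e2.2 (by linarith)
      unfold le1; omega
  · rw [g.idx_L, g.idx_L]; omega
  · intro y h1 h2
    rw [← g.idx_even, ← g.idx_even]; unfold le1 at h1; omega

lemma cell_ret (i j : Fin 2) (hij : i ≠ j) (τ σ β : ℤ) (h : le1 τ σ) (hne : τ ≠ σ) :
    ∃ r : Plane → Plane, ContinuousOn r {x | le1 (g.idx (x i)) σ ∧ le1 (g.idx (x j)) β} ∧
      ∀ x : Plane, le1 (g.idx (x i)) σ → le1 (g.idx (x j)) β →
        le1 (g.idx (r x i)) σ ∧ le1 (g.idx (r x j)) β ∧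
        ¬ (g.idx (r x j) = β ∧ (g.idx (r x i) = τ ∨ g.idx (r x i) = σ)) ∧
        (¬ (g.idx (x j) = β ∧ (g.idx (x i) = τ ∨ g.idx (x i) = σ)) → r x = x) := by
  obtain ⟨p, q, hpq, f1, f2, f3⟩ := g.coord_free τ σ h hne
  have hpq' : p - q ≠ 0 := sub_ne_zero.2 hpq
  have hcases : ∀ k : Fin 2, k = i ∨ k = j := by intro k; omega
  by_cases hβ : β % 2 = 1
  · obtain ⟨γ, δ, hl, g1, g2, g3⟩ := g.coord_odd β hβ
    have hl' : δ - γ ≠ 0 := by linarith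
    set v : Plane → ℝ := fun x => (x i - q) / (p - q) with hv
    set u : Plane → ℝ := fun x => (2 * x j - γ - δ) / (δ - γ) with hu
    set m : Plane → ℝ := fun x => max |u x| ((2 - v x) / 2) with hm
    have hvc : Continuous v := by fun_prop
    have huc : Continuous u := by fun_prop
    have hmc : Continuous m := by fun_prop
    refine ⟨fun x k => if k = i then q + (p - q) * (2 + (v x - 2) / m x)
      else (γ + δ + (δ - γ) * (u x / m x)) / 2, ?_, ?_⟩
    · have hm0 : ∀ x ∈ {x : Plane | le1 (g.idx (x i)) σ ∧ le1 (g.idx (x j)) β}, m x ≠ 0 :=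
        fun x hx => (square_ret (v x) (u x) ((f1 _).1 hx.1) ((g1 _).1 hx.2)).1.ne'
      have hvo := hvc.continuousOn (s := {x : Plane | le1 (g.idx (x i)) σ ∧ le1 (g.idx (x j)) β})
      have huo := huc.continuousOn (s := {x : Plane | le1 (g.idx (x i)) σ ∧ le1 (g.idx (x j)) β})
      have hmo := hmc.continuousOn (s := {x : Plane | le1 (g.idx (x i)) σ ∧ le1 (g.idx (x j)) β})
      have a1 := (hvo.sub (continuousOn_const (c := (2 : ℝ)))).div hmo hm0
      have a2 := huo.div hmo hm0
      apply continuousOn_pi.2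
      intro k
      rcases hcases k with rfl | rfl
      · simp only [if_true]
        exact continuousOn_const.add (continuousOn_const.mul (continuousOn_const.add a1))
      · simp only [if_neg hij.symm]
        exact (continuousOn_const.add (continuousOn_const.mul a2)).div_const _
    · intro x hx1 hx2
      obtain ⟨-, b1, b2, b3, b4⟩ := square_ret (v x) (u x) ((f1 _).1 hx1) ((g1 _).1 hx2)
      change 2 + (v x - 2) / m x ∈ _ at b1
      change u x / m x ∈ _ at b2
      change 2 + (v x - 2) / m x = 0 ∨ u x / m x = 1 ∨ u x / m x = -1 at b3
      change _ → 2 + (v x - 2) / m x = v x ∧ u x / m x = u x at b4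
      simp only [if_true, if_neg hij.symm]
      refine ⟨?_, ?_, ?_, ?_⟩
      · rw [f1]; convert b1 using 1; field_simp; ring
      · rw [g1]; convert b2 using 1; field_simp; ring
      · rintro ⟨c1, c2⟩
        rcases b3 with b | b | b
        · rw [b, mul_zero, add_zero] at c2; tauto
        · rw [b, show (γ + δ + (δ - γ) * 1) / 2 = δ by ring] at c1; tauto
        · rw [b, show (γ + δ + (δ - γ) * -1) / 2 = γ by ring] at c1; tauto
      · intro hx
        have : v x = 0 ∨ u x = 1 ∨ u x = -1 := by
          by_cases hj : g.idx (x j) = β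
          · left
            simp only [hv]
            rw [f3 (x i) hx1 (by tauto) (by tauto), sub_self, zero_div]
          · right
            rcases g3 (x j) hx2 hj with e | e
            · right; simp only [hu]; rw [e, div_eq_iff hl']; ring
            · left; simp only [hu]; rw [e, div_eq_iff hl']; ring
        obtain ⟨d1, d2⟩ := b4 this
        funext k
        rw [d1, d2]
        rcases hcases k with rfl | rfl
        · simp only [if_true, hv]; field_simp; ring
        · simp only [if_neg hij.symm, hu]; field_simp; ring
  · refine ⟨fun x k => if k = i then q else x k, ?_, ?_⟩
    · apply Continuous.continuousOn
      apply continuous_pi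
      intro k
      split_ifs <;> fun_prop
    · intro x hx1 hx2
      simp only [if_true, if_neg hij.symm]
      refine ⟨(f1 _).2 (by simp), hx2, by tauto, ?_⟩
      intro hx
      funext k
      rcases hcases k with rfl | rfl
      · simp only [if_true]
        have : g.idx (x j) = β := by unfold le1 at hx2; omega
        exact (f3 _ hx1 (by tauto) (by tauto)).symm
      · simp only [if_neg hij.symm]

end Grid

/-! ### Performing the collapse -/

namespace Grid
variable (g : Grid)

lemma down_diff {X' : Set Cell} {t s : Cell} (hd : DownSet X') (hF : FreePair X' t s) :
    DownSet (X' \ {t, s}) := by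
  rintro c d hcd ⟨hdX, hdn⟩
  obtain ⟨hs, hts, hne, -, hfree⟩ := hF
  refine ⟨hd _ _ hcd hdX, ?_⟩
  rintro (rfl | rfl)
  · exact hdn (hfree d hdX hcd)
  · exact hdn (hfree d hdX (fle_trans hts hcd))

lemma collapse_ret {t s : Cell} (hts : fle t s) (hne : t ≠ s) (hc : t.1 = s.1 ∨ t.2 = s.2) :
    ∃ r : Plane → Plane, ContinuousOn r {x | fle (g.cellOf x) s} ∧
      ∀ x, fle (g.cellOf x) s → fle (g.cellOf (r x)) s ∧
        (g.cellOf (r x) ≠ t ∧ g.cellOf (r x) ≠ s) ∧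
        (g.cellOf x ≠ t → g.cellOf x ≠ s → r x = x) := by
  obtain ⟨t1, t2⟩ := t
  obtain ⟨s1, s2⟩ := s
  simp only at hc
  rcases hc with rfl | rfl
  · have hn : t2 ≠ s2 := fun h => hne (by rw [h])
    obtain ⟨r, hr, hr2⟩ := g.cell_ret 1 0 (by decide) t2 s2 t1 hts.2 hn
    refine ⟨r, ?_, ?_⟩
    · refine hr.mono ?_
      rintro x ⟨h1, h2⟩; exact ⟨h2, h1⟩
    · rintro x ⟨h1, h2⟩
      obtain ⟨k1, k2, k3, k4⟩ := hr2 x h2 h1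
      simp only [cellOf, ne_eq, Prod.mk.injEq] at *
      exact ⟨⟨k2, k1⟩, by tauto, by intro a b; exact k4 (by tauto)⟩
  · have hn : t1 ≠ s1 := fun h => hne (by rw [h])
    obtain ⟨r, hr, hr2⟩ := g.cell_ret 0 1 (by decide) t1 s1 t2 hts.1 hn
    refine ⟨r, hr, ?_⟩
    rintro x ⟨h1, h2⟩
    obtain ⟨k1, k2, k3, k4⟩ := hr2 x h1 h2
    simp only [cellOf, ne_eq, Prod.mk.injEq] at *
    exact ⟨⟨k1, k2⟩, by tauto, by intro a b; exact k4 (by tauto)⟩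

lemma collapse_step {X' : Set Cell} {t s : Cell} (hd : DownSet X') (hF : FreePair X' t s) :
    ∃ ρ : Plane → Plane, ContinuousOn ρ (g.rl X') ∧ (∀ x ∈ g.rl X', ρ x ∈ g.rl (X' \ {t, s})) ∧
      (∀ x ∈ g.rl (X' \ {t, s}), ρ x = x) ∧
      Nonempty (ContinuousMap.HomotopyEquiv ↥(g.rl X') ↥(g.rl (X' \ {t, s}))) := by
  have hd2 := down_diff hd hF
  obtain ⟨hs, hts, hne, hc, -⟩ := hF
  obtain ⟨r, hr, hr2⟩ := g.collapse_ret hts hne hc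
  have hK : {x | fle (g.cellOf x) s} = closure (g.rl {s}) := (g.closure_rl_single s).symm
  have hU : g.rl X' = g.rl (X' \ {t, s}) ∪ {x | fle (g.cellOf x) s} := by
    ext x
    constructor
    · intro hx
      by_cases h : g.cellOf x = t ∨ g.cellOf x = s
      · right
        rcases h with h | h
        · exact (h ▸ hts : fle (g.cellOf x) s)
        · exact (h ▸ fle_refl _ : fle (g.cellOf x) s)
      · exact Or.inl ⟨hx, h⟩
    · rintro (hx | hx)
      · exact hx.1
      · exact hd _ _ hx hs
  have := conv_collapse (U := g.rl (X' \ {t, s})) (K := {x | fle (g.cellOf x) s}) (g.rl_closed hd2)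
    (by rw [hK]; exact isClosed_closure) (by rw [hK]; exact (g.rl_convex s).closure) r hr
    (fun x hx => ⟨(hr2 x hx).1, hd _ _ (hr2 x hx).1 hs, by
      rintro (h | h)
      · exact (hr2 x hx).2.1.1 h
      · exact (hr2 x hx).2.1.2 h⟩)
    (fun x hx hxU => (hr2 x hx).2.2 (fun h => hxU.2 (Or.inl h)) (fun h => hxU.2 (Or.inr h)))
  rw [← hU] at this
  exact this

theorem homotopy_of_comb {X Z : Set Cell} (H : Comb X Z) :
    Nonempty (ContinuousMap.HomotopyEquiv ↥(g.rl X) ↥(g.rl (X ∩ Z))) := by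
  have := comb_collapse H (fun X' =>
    Nonempty (ContinuousMap.HomotopyEquiv ↥(g.rl X) ↥(g.rl X')) ∧
    ∃ r : Plane → Plane, ContinuousOn r (g.rl X) ∧ (∀ x ∈ g.rl X, r x ∈ g.rl X') ∧
      ∀ x ∈ g.rl X', r x = x) ?_ ?_ ?_
  · exact this.1
  · exact ⟨⟨ContinuousMap.HomotopyEquiv.refl _⟩, id, continuousOn_id, fun x hx => hx, fun x _ => rfl⟩
  · rintro X' t s - hd ⟨⟨e⟩, r, hr, hr1, hr2⟩ hF
    obtain ⟨ρ, hρ, hρ1, hρ2, ⟨e'⟩⟩ := g.collapse_step hd hF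
    refine ⟨⟨e.trans e'⟩, ρ ∘ r, hρ.comp hr hr1, fun x hx => hρ1 _ (hr1 x hx), ?_⟩
    intro x hx
    rw [Function.comp_apply, hr2 x hx.1, hρ2 x hx]
  · rintro X' hY hXX hd ⟨-, r, hr, hr1, hr2⟩ c hc
    by_cases hcZ : c ∈ Z
    · exact ⟨c, ⟨hXX hc, hcZ⟩, CRel.refl c⟩
    obtain ⟨d, y, hcd, hy, hyd⟩ := H.F2 c ⟨hXX hc, hcZ⟩
    have hdX := (CRel.mem hcd).1 ⟨hXX hc, hcZ⟩
    have hrel : CRel X c y :=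
      (CRel.mono inter_subset_left hcd).trans (CRel.of hy.1 hdX.1 hyd).symm
    obtain ⟨x, rfl⟩ := g.rl_nonempty c
    obtain ⟨q, rfl⟩ := g.rl_nonempty y
    refine ⟨g.cellOf q, hy, ?_⟩
    have hxX : x ∈ g.rl X := hXX hc
    have hq : q ∈ connectedComponentIn (g.rl X) x := by
      rw [g.comp_eq hxX]; exact hrel
    have hpre : IsPreconnected (r '' connectedComponentIn (g.rl X) x) :=
      isPreconnected_connectedComponentIn.image r (hr.mono (connectedComponentIn_subset _ _))
    have key := g.const (S := X') (fun d => CRel X' (g.cellOf x) d)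
      (fun c d hc hd hcd => propext ⟨fun h => h.trans (CRel.of hc hd hcd),
        fun h => h.trans (CRel.of hc hd hcd).symm⟩) hpre
      (by
        rintro _ ⟨z, hz, rfl⟩
        exact hr1 z (connectedComponentIn_subset _ _ hz))
      (x := x) (y := q) ⟨x, mem_connectedComponentIn hxX, hr2 x hc⟩ ⟨q, hq, hr2 q (hY hy)⟩
    exact key.mp (CRel.refl _)

end Grid

/-! ### The grid of the two images -/

lemma exists_grid (L : ℤ → ℝ) (hm : StrictMono L)
    (h : ∀ x, ∃ k, L k ≤ x ∧ ∀ m, L m ≤ x → m ≤ k) : ∃ g : Grid, g.L = L := by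
  classical
  choose f hf1 hf2 using h
  refine ⟨⟨L, fun x => if L (f x) = x then 2 * f x else 2 * f x + 1, ?_, ?_⟩, rfl⟩
  · intro k x
    have : L k ≤ x ↔ k ≤ f x := ⟨hf2 x k, fun hk => (hm.monotone hk).trans (hf1 x)⟩
    rw [this]
    split_ifs <;> omega
  · intro k x
    split_ifs with hx
    · have : x ≤ L k ↔ f x ≤ k := by
        conv_lhs => rw [← hx]
        exact hm.le_iff_le
      rw [this]; omega
    · have : x ≤ L k ↔ f x < k := by
        constructor
        · intro hk
          exact hm.lt_iff_lt.1 ((lt_of_le_of_ne (hf1 x) hx).trans_le hk)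
        · intro hk
          by_contra hcon
          have := hf2 x k (not_le.1 hcon).le
          omega
      rw [this]; omega

/-- The grid lines `i - 2ε, i - ε, i + ε, i + 2ε` for integers `i`. -/
def lines (ε : ℝ) (k : ℤ) : ℝ :=
  ((k / 4 : ℤ) : ℝ) + if k % 4 = 0 then -2 * ε else if k % 4 = 1 then -ε else
    if k % 4 = 2 then ε else 2 * ε

lemma lines0 (ε : ℝ) (i : ℤ) : lines ε (4 * i) = i - 2 * ε := by
  unfold lines
  rw [show 4 * i / 4 = i by omega, if_pos (by omega)]; ring

lemma lines1 (ε : ℝ) (i : ℤ) : lines ε (4 * i + 1) = i - ε := by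
  unfold lines
  rw [show (4 * i + 1) / 4 = i by omega, if_neg (by omega), if_pos (by omega)]; ring

lemma lines2 (ε : ℝ) (i : ℤ) : lines ε (4 * i + 2) = i + ε := by
  unfold lines
  rw [show (4 * i + 2) / 4 = i by omega, if_neg (by omega), if_neg (by omega), if_pos (by omega)]

lemma lines3 (ε : ℝ) (i : ℤ) : lines ε (4 * i + 3) = i + 2 * ε := by
  unfold lines
  rw [show (4 * i + 3) / 4 = i by omega, if_neg (by omega), if_neg (by omega), if_neg (by omega)]

lemma exists_grid_lines {ε : ℝ} (h0 : 0 < ε) (h1 : ε < 1 / 4) : ∃ g : Grid, g.L = lines ε := by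
  have hm : StrictMono (lines ε) := by
    apply strictMono_int_of_lt_succ
    intro k
    obtain ⟨i, rfl | rfl | rfl | rfl⟩ : ∃ i, k = 4 * i ∨ k = 4 * i + 1 ∨ k = 4 * i + 2 ∨
      k = 4 * i + 3 := ⟨k / 4, by omega⟩
    · rw [lines0, lines1]; linarith
    · rw [show 4 * i + 1 + 1 = 4 * i + 2 by ring, lines1, lines2]; linarith
    · rw [show 4 * i + 2 + 1 = 4 * i + 3 by ring, lines2, lines3]; linarith
    · rw [show 4 * i + 3 + 1 = 4 * (i + 1) by ring, lines3, lines0]; push_cast; linarith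
  refine exists_grid _ hm ?_
  intro x
  refine Int.exists_greatest_of_bdd (P := fun k => lines ε k ≤ x) ⟨4 * (⌊x⌋ + 2), ?_⟩
    ⟨4 * ⌊x⌋, ?_⟩
  · intro z hz
    by_contra hcon
    have := hm (not_le.1 hcon)
    rw [lines0] at this
    push_cast at this
    have := Int.lt_floor_add_one x
    linarith
  · rw [lines0]
    have := Int.floor_le x
    linarith

lemma mem_thick {δ : ℝ} (hδ : 0 ≤ δ) (S : Set (ℕ × ℕ)) (y : Plane) :
    y ∈ thick δ (fg S) ↔ ∃ p ∈ S, ((p.1 : ℝ) - 1 - δ ≤ y 0 ∧ y 0 ≤ p.1 + δ) ∧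
      ((p.2 : ℝ) - 1 - δ ≤ y 1 ∧ y 1 ≤ p.2 + δ) := by
  have clamp : ∀ a t : ℝ, a - 1 - δ ≤ t → t ≤ a + δ →
      max (a - 1) (min t a) ∈ Icc (a - 1) a ∧ |max (a - 1) (min t a) - t| ≤ δ := by
    intro a t h1 h2
    refine ⟨⟨le_max_left _ _, max_le (by linarith) (min_le_right _ _)⟩, ?_⟩
    rw [abs_le]
    rcases max_cases (a - 1) (min t a) with h | h <;> rcases min_cases t a with h' | h' <;>
      constructor <;> linarith
  constructor
  · rintro ⟨x, hx, hxy⟩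
    simp only [fg, mem_iUnion] at hx
    obtain ⟨p, hp, ⟨⟨a1, a2⟩, ⟨b1, b2⟩⟩⟩ := hx
    rw [pi_norm_le_iff_of_nonneg hδ] at hxy
    have c0 := abs_le.1 (hxy 0)
    have c1 := abs_le.1 (hxy 1)
    simp only [Pi.sub_apply] at c0 c1
    exact ⟨p, hp, ⟨by linarith, by linarith⟩, ⟨by linarith, by linarith⟩⟩
  · rintro ⟨p, hp, ⟨a1, a2⟩, ⟨b1, b2⟩⟩
    obtain ⟨k1, k2⟩ := clamp p.1 (y 0) a1 a2
    obtain ⟨l1, l2⟩ := clamp p.2 (y 1) b1 b2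
    refine ⟨![max ((p.1 : ℝ) - 1) (min (y 0) p.1), max ((p.2 : ℝ) - 1) (min (y 1) p.2)], ?_, ?_⟩
    · simp only [fg, mem_iUnion]
      exact ⟨p, hp, k1, l1⟩
    · rw [pi_norm_le_iff_of_nonneg hδ]
      intro k
      fin_cases k
      · exact k2
      · exact l2

/-- The cells of a thickened image. -/
def cellsOf (S : Set (ℕ × ℕ)) (lo hi : ℤ) : Set Cell :=
  {c | ∃ p ∈ S, (8 * (p.1 : ℤ) - lo ≤ c.1 ∧ c.1 ≤ 8 * (p.1 : ℤ) + hi) ∧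
    (8 * (p.2 : ℤ) - lo ≤ c.2 ∧ c.2 ≤ 8 * (p.2 : ℤ) + hi)}

lemma nice_cellsOf (S : Set (ℕ × ℕ)) (lo hi : ℤ) (h : (lo = 6 ∧ hi = 4) ∨ (lo = 8 ∧ hi = 6)) :
    Nice (cellsOf S lo hi) := by
  have hst : ∀ (p : ℕ) (a : ℤ), (8 * (p : ℤ) - lo ≤ st a ∧ st a ≤ 8 * (p : ℤ) + hi) ↔
      (8 * (p : ℤ) - lo ≤ a ∧ a ≤ 8 * (p : ℤ) + hi) := by
    intro p a
    unfold st
    rcases h with ⟨rfl, rfl⟩ | ⟨rfl, rfl⟩ <;> split_ifs <;> omega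
  refine ⟨?_, ?_, ?_⟩
  · rintro ⟨c1, c2⟩ ⟨d1, d2⟩ hcd ⟨p, hp, h1, h2⟩
    unfold fle le1 at hcd
    simp only at hcd h1 h2
    refine ⟨p, hp, ?_, ?_⟩ <;> simp only <;> omega
  · intro a b
    simp only [cellsOf, mem_ofPred_eq, hst]
  · intro a b
    simp only [cellsOf, mem_ofPred_eq, hst]

lemma bdd_cellsOf {S : Set (ℕ × ℕ)} {h w : ℕ} (hS : OnGrid S h w) (lo hi : ℤ)
    (hlh : (lo = 6 ∧ hi = 4) ∨ (lo = 8 ∧ hi = 6)) :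
    (cellsOf S lo hi).Finite ∧ ∀ c ∈ cellsOf S lo hi, 0 ≤ c.1 := by
  have key : ∀ c ∈ cellsOf S lo hi, (0 ≤ c.1 ∧ c.1 ≤ 8 * h + 6) ∧ (0 ≤ c.2 ∧ c.2 ≤ 8 * w + 6) := by
    rintro c ⟨p, hp, h1, h2⟩
    obtain ⟨⟨a1, a2⟩, ⟨b1, b2⟩⟩ := hS hp
    omega
  refine ⟨?_, fun c hc => (key c hc).1.1⟩
  refine Set.Finite.subset ((Set.finite_Icc (0 : ℤ) (8 * h + 6)).prod
    (Set.finite_Icc (0 : ℤ) (8 * w + 6))) ?_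
  intro c hc
  exact key c hc

lemma thick_eq1 {ε : ℝ} (h0 : 0 < ε) {g : Grid} (hg : g.L = lines ε) (S : Set (ℕ × ℕ)) :
    thick ε (fg S) = g.rl (cellsOf S 6 4) := by
  have key : ∀ (p : ℕ) (t : ℝ), ((p : ℝ) - 1 - ε ≤ t ∧ t ≤ p + ε) ↔
      (8 * (p : ℤ) - 6 ≤ g.idx t ∧ g.idx t ≤ 8 * (p : ℤ) + 4) := by
    intro p t
    have e1 := g.h1 (4 * ((p : ℤ) - 1) + 1) t
    have e2 := g.h2 (4 * (p : ℤ) + 2) t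
    rw [hg, lines1] at e1
    rw [hg, lines2] at e2
    push_cast at e1 e2
    rw [← e1, ← e2]
    omega
  ext y
  rw [mem_thick h0.le]
  simp only [key]
  rfl

lemma thick_eq2 {ε : ℝ} (h0 : 0 < ε) {g : Grid} (hg : g.L = lines ε) (S : Set (ℕ × ℕ)) :
    thick (2 * ε) (fg S) = g.rl (cellsOf S 8 6) := by
  have key : ∀ (p : ℕ) (t : ℝ), ((p : ℝ) - 1 - 2 * ε ≤ t ∧ t ≤ p + 2 * ε) ↔
      (8 * (p : ℤ) - 8 ≤ g.idx t ∧ g.idx t ≤ 8 * (p : ℤ) + 6) := by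
    intro p t
    have e1 := g.h1 (4 * ((p : ℤ) - 1)) t
    have e2 := g.h2 (4 * (p : ℤ) + 3) t
    rw [hg, lines0] at e1
    rw [hg, lines3] at e2
    push_cast at e1 e2
    rw [← e1, ← e2]
    omega
  ext y
  rw [mem_thick (by linarith)]
  simp only [key]
  rfl

theorem main_aux (h w : ℕ) (P G : Set (ℕ × ℕ)) (hP : OnGrid P h w) (hG : OnGrid G h w)
    (ε : ℝ) (h0 : 0 < ε) (h1 : ε < 1 / 4) (hz : ZeroLoss P G ε) :
    Nonempty (ContinuousMap.HomotopyEquiv ↥(thick ε (fg P)) ↥(thick (2 * ε) (fg G))) := by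
  obtain ⟨g, hg⟩ := exists_grid_lines h0 h1
  obtain ⟨hz1, hz2⟩ := hz
  unfold RegularComp TPset TNset at hz1 hz2
  unfold FPset at hz1
  unfold FNset at hz2
  rw [thick_eq1 h0 hg, thick_eq2 h0 hg] at *
  have nA := nice_cellsOf P 6 4 (by omega)
  have nB := nice_cellsOf G 8 6 (by omega)
  obtain ⟨fA, pA⟩ := bdd_cellsOf hP 6 4 (by omega)
  obtain ⟨fB, pB⟩ := bdd_cellsOf hG 8 6 (by omega)
  generalize cellsOf P 6 4 = A at *
  generalize cellsOf G 8 6 = B at *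
  have c1 : Comb A B := g.comb_of_reg nA nB fA pA hz1
  have c2 : Comb B A := by
    refine g.comb_of_reg nB nA fB pB ?_
    rw [inter_comm B A, inter_comm B Aᶜ, inter_comm Bᶜ Aᶜ]
    exact hz2
  obtain ⟨e1⟩ := g.homotopy_of_comb c1
  obtain ⟨e2⟩ := g.homotopy_of_comb c2
  rw [inter_comm] at e2
  exact ⟨e1.trans e2.symm⟩

/-- Under the zero-loss hypothesis, the thickened prediction foreground and the
thickened ground-truth foreground are homotopy equivalent. -/
theorem zero_loss_thickened_foregrounds_homotopyEquiv
    (h w : ℕ) (P G : Set (ℕ × ℕ)) (hP : OnGrid P h w) (hG : OnGrid G h w)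
    (ε : ℝ) (hε0 : 0 < ε) (hε : ε < 1 / 4) (hzero : ZeroLoss P G ε) :
    Nonempty (ContinuousMap.HomotopyEquiv ↥(thick ε (fg P)) ↥(thick (2 * ε) (fg G))) := by
  exact main_aux h w P G hP hG ε hε0 hε hzero

end
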